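/- arXiv:2010.14614 — 2 statements merged into one kernel-verified Lean document; each statement's English description precedes it below -/
import Mathlib

section
/- Let α < 0, γ < 0 and β ≤ 0, and let (u,v) be a regular solution of the Schrödinger–Korteweg–de Vries system with these parameters. Then for every exponent p₁ with 0 < p₁ < 2/3 and every constant K > 0, liminf_{t→∞} ∫_{{x : |x| ≤ K·t^{p₁}}} ( (∂ₓv(t,x))² + |∂ₓu(t,x)|² ) dx = 0. -/
open MeasureTheory Filter

/-- A regular solution of the Schrödinger–Korteweg–de Vries system
    `i ∂ₜu + ∂ₓ²u = α u v + β u |u|²`,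
    `∂ₜv + ∂ₓ³v + v ∂ₓv = γ ∂ₓ(|u|²)`:
    `u, v` are smooth in `(t,x)`, Schwartz in `x` for each fixed `t`, satisfy the
    equations pointwise, and have uniformly-in-time bounded `H¹ₓ` norms. -/
def IsSKdVSolution (α β γ : ℝ) (u : ℝ → ℝ → ℂ) (v : ℝ → ℝ → ℝ) : Prop :=
  ContDiff ℝ (⊤ : ℕ∞) (fun p : ℝ × ℝ => u p.1 p.2) ∧
  ContDiff ℝ (⊤ : ℕ∞) (fun p : ℝ × ℝ => v p.1 p.2) ∧
  (∀ t : ℝ, ∃ f : SchwartzMap ℝ ℂ, ∀ x, f x = u t x) ∧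
  (∀ t : ℝ, ∃ g : SchwartzMap ℝ ℝ, ∀ x, g x = v t x) ∧
  (∀ t x : ℝ,
    Complex.I * deriv (fun s => u s x) t + iteratedDeriv 2 (u t) x
      = (α : ℂ) * u t x * (v t x : ℂ) + (β : ℂ) * u t x * (‖u t x‖ : ℂ) ^ 2) ∧
  (∀ t x : ℝ,
    deriv (fun s => v s x) t + iteratedDeriv 3 (v t) x + v t x * deriv (v t) x
      = γ * deriv (fun y => ‖u t y‖ ^ 2) x) ∧
  (∃ C : ℝ, ∀ t : ℝ,
    (∫ x : ℝ, ‖u t x‖ ^ 2) + (∫ x : ℝ, ‖deriv (u t) x‖ ^ 2) +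
      (∫ x : ℝ, (v t x) ^ 2) + (∫ x : ℝ, (deriv (v t) x) ^ 2) ≤ C)

/-!
A combination of the local conservation laws of momentum and mass, in which the coupling terms of
the two equations cancel, has the form `∂ₜF + ∂ₓQ + ∂ₓ³N = 0`. A uniform `H¹` bound gives a uniform
bound on `(u, v)` by Sobolev embedding, so a large enough multiple of the mass law makes the flux
`Q` dominate `(∂ₓv)² + |∂ₓu|²`.

Test this law against a weight `w` of bounded size living on the scale `m = T ^ (2 / 3)`, with slope
at least `1 / (2 δ m)` for `|x| ≤ δ m` and at least `-A / m` elsewhere. This bounds the integral of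
`Q` over `T ≤ t ≤ 2 T`, `|x| ≤ δ m` by three terms, up to constants:
* `δ m · √m` from `∫ F w` at the end times, where `√m` is the price in Cauchy–Schwarz for the linear
  part of `F`, which is only square integrable;
* `δ m · T / m` from the negative slopes of `w`;
* `δ m · T · √m / m³` from the dispersive term, which puts three derivatives on `w`.

The first two are of size `δ T` because `m ^ (3 / 2) = T`, and the last one is `o(T)`. Hence the
time average of `∫ Q` over `|x| ≤ δ m` is arbitrarily small for small `δ`, and a radius
`ρ(t) = o(t ^ (2 / 3))` stays below `δ m` on `[T, 2 T]`.
-/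
open Function Set Topology
open scoped ContDiff InnerProductSpace

/-! ### Smooth functions of time and space -/

section JointlySmooth

variable {E : Type*} [NormedAddCommGroup E] [NormedSpace ℝ E] {f : ℝ → ℝ → E}

lemma contDiff_slice {n : ℕ∞ω} (hf : ContDiff ℝ n (uncurry f)) (t : ℝ) : ContDiff ℝ n (f t) :=
  hf.comp (contDiff_prodMk_right t)

lemma contDiff_timeSlice {n : ℕ∞ω} (hf : ContDiff ℝ n (uncurry f)) (x : ℝ) :
    ContDiff ℝ n fun t => f t x :=
  hf.comp (contDiff_prodMk_left x)

lemma contDiff_uncurry_deriv {m n : ℕ∞ω} (hf : ContDiff ℝ m (uncurry f)) (hmn : n + 1 ≤ m) :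
    ContDiff ℝ n (uncurry fun t => deriv (f t)) := by
  have hg : ContDiff ℝ m (uncurry fun p : ℝ × ℝ => f p.1) :=
    hf.comp (contDiff_fst.fst.prodMk contDiff_snd)
  exact hg.fderiv_apply contDiff_snd contDiff_const hmn

lemma contDiff_uncurry_timeDeriv {m n : ℕ∞ω} (hf : ContDiff ℝ m (uncurry f)) (hmn : n + 1 ≤ m) :
    ContDiff ℝ n (uncurry fun t x => deriv (fun s => f s x) t) :=
  (contDiff_uncurry_deriv (f := fun x s => f s x) (hf.comp (contDiff_snd.prodMk contDiff_fst))
    hmn).comp (contDiff_snd.prodMk contDiff_fst)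

lemma hasDerivAt_slice {m : ℕ∞ω} (hf : ContDiff ℝ m (uncurry f)) (hm : m ≠ 0) (t x : ℝ) :
    HasDerivAt (f t) (fderiv ℝ (uncurry f) (t, x) (0, 1)) x :=
  (hf.differentiable hm (t, x)).hasFDerivAt.comp_hasDerivAt x
    ((hasDerivAt_const x t).prodMk (hasDerivAt_id' x))

lemma hasDerivAt_timeSlice {m : ℕ∞ω} (hf : ContDiff ℝ m (uncurry f)) (hm : m ≠ 0) (t x : ℝ) :
    HasDerivAt (fun s => f s x) (fderiv ℝ (uncurry f) (t, x) (1, 0)) t :=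
  (hf.differentiable hm (t, x)).hasFDerivAt.comp_hasDerivAt (f := fun s => (s, x)) t
    ((hasDerivAt_id' t).prodMk (hasDerivAt_const t x))

lemma hasDerivAt_deriv_timeSlice (hf : ContDiff ℝ ∞ (uncurry f)) (t x : ℝ) :
    HasDerivAt (fun s => deriv (f s) x) (deriv (fun y => deriv (fun s => f s y) t) x) t := by
  have hsymm : IsSymmSndFDerivAt ℝ (uncurry f) (t, x) :=
    (contDiff_infty.1 hf 2).contDiffAt.isSymmSndFDerivAt (by simp)
  have hd : DifferentiableAt ℝ (fderiv ℝ (uncurry f)) (t, x) :=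
    (hf.fderiv_right (m := ∞) le_rfl).differentiable (by simp) _
  have ht : HasDerivAt (fun s => fderiv ℝ (uncurry f) (s, x))
      (fderiv ℝ (fderiv ℝ (uncurry f)) (t, x) (1, 0)) t :=
    hd.hasFDerivAt.comp_hasDerivAt t ((hasDerivAt_id' t).prodMk (hasDerivAt_const t x))
  have hx : HasDerivAt (fun y => fderiv ℝ (uncurry f) (t, y))
      (fderiv ℝ (fderiv ℝ (uncurry f)) (t, x) (0, 1)) x :=
    hd.hasFDerivAt.comp_hasDerivAt x ((hasDerivAt_const x t).prodMk (hasDerivAt_id' x))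
  have htx : HasDerivAt (fun s => fderiv ℝ (uncurry f) (s, x) (0, 1))
      (fderiv ℝ (fderiv ℝ (uncurry f)) (t, x) (1, 0) (0, 1)) t :=
    (ContinuousLinearMap.apply ℝ E ((0 : ℝ), (1 : ℝ))).hasFDerivAt.comp_hasDerivAt t ht
  have hxt : HasDerivAt (fun y => fderiv ℝ (uncurry f) (t, y) (1, 0))
      (fderiv ℝ (fderiv ℝ (uncurry f)) (t, x) (0, 1) (1, 0)) x :=
    (ContinuousLinearMap.apply ℝ E ((1 : ℝ), (0 : ℝ))).hasFDerivAt.comp_hasDerivAt x hx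
  have hslice (s y : ℝ) : deriv (f s) y = fderiv ℝ (uncurry f) (s, y) (0, 1) :=
    (hasDerivAt_slice hf (by simp) s y).deriv
  have htimeSlice (s y : ℝ) :
      deriv (fun r => f r y) s = fderiv ℝ (uncurry f) (s, y) (1, 0) :=
    (hasDerivAt_timeSlice hf (by simp) s y).deriv
  simp only [hslice, htimeSlice]
  rwa [hxt.deriv, hsymm.eq]

end JointlySmooth

/-! ### Weighted dispersive laws -/

lemma integral_iteratedDeriv_mul_eq {f w : ℝ → ℝ} {a b : ℝ} (hf : ContDiff ℝ ∞ f)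
    (hw : ContDiff ℝ ∞ w) (hsupp : tsupport w ⊆ Ioo a b) (n : ℕ) :
    ∫ x in a..b, iteratedDeriv n f x * w x =
      (-1) ^ n * ∫ x in a..b, f x * iteratedDeriv n w x := by
  induction n generalizing w with
  | zero => simp
  | succ n ih =>
    have hfn : ContDiff ℝ ∞ (iteratedDeriv n f) := by
      rw [iteratedDeriv_eq_iterate]; exact hf.iterate_deriv n
    have hw' : ContDiff ℝ ∞ (deriv w) := by simpa using hw.iterate_deriv 1
    have hzero : ∀ x ∉ Ioo a b, w x = 0 := fun x hx =>
      image_eq_zero_of_notMem_tsupport fun h => hx (hsupp h)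
    have hparts := intervalIntegral.integral_mul_deriv_eq_deriv_mul (a := a) (b := b)
      (fun x _ => (hw.differentiable (by simp) x).hasDerivAt)
      (fun x _ => (hfn.differentiable (by simp) x).hasDerivAt)
      (hw'.continuous.intervalIntegrable a b)
      ((hfn.continuous_deriv (by simp)).intervalIntegrable a b)
    rw [hzero a (by simp), hzero b (by simp)] at hparts
    calc ∫ x in a..b, iteratedDeriv (n + 1) f x * w x
        = ∫ x in a..b, w x * deriv (iteratedDeriv n f) x := by
          simp only [iteratedDeriv_succ, mul_comm]
      _ = -∫ x in a..b, iteratedDeriv n f x * deriv w x := by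
          rw [hparts]; simp [mul_comm]
      _ = (-1) ^ (n + 1) * ∫ x in a..b, f x * iteratedDeriv (n + 1) w x := by
          rw [ih hw' (tsupport_deriv_subset.trans hsupp), iteratedDeriv_succ', pow_succ]; ring

lemma integral_integral_timeDeriv_mul {F : ℝ → ℝ → ℝ} {w : ℝ → ℝ} (hF : ContDiff ℝ 1 (uncurry F))
    (hw : Continuous w) (T S a b : ℝ) :
    ∫ t in T..S, ∫ x in a..b, deriv (fun s => F s x) t * w x =
      (∫ x in a..b, F S x * w x) - ∫ x in a..b, F T x * w x := by
  have hF' : Continuous (uncurry fun t x => deriv (fun s => F s x) t * w x) :=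
    (contDiff_uncurry_timeDeriv (n := 0) hF (by simp)).continuous.mul (hw.comp continuous_snd)
  have hint : ∀ t, IntervalIntegrable (fun x => F t x * w x) volume a b := fun t =>
    ((contDiff_slice hF t).continuous.mul hw).intervalIntegrable a b
  rw [intervalIntegral_intervalIntegral_swap, ← intervalIntegral.integral_sub (hint S) (hint T)]
  · refine intervalIntegral.integral_congr fun x _ => ?_
    have hFx : ContDiff ℝ 1 fun t => F t x := contDiff_timeSlice hF x
    simp only [intervalIntegral.integral_mul_const, ← sub_mul]
    congr 1
    exact intervalIntegral.integral_deriv_eq_sub (fun t _ => hFx.differentiable (by simp) t)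
      ((hFx.continuous_deriv le_rfl).intervalIntegrable T S)
  · exact (hF'.continuousOn.integrableOn_compact (isCompact_uIcc.prod isCompact_uIcc)).mono_set
      (prod_mono uIoc_subset_uIcc uIoc_subset_uIcc)

/-- The balance law `∂ₜF + ∂ₓQ + ∂ₓ³N = f` for a density `F` with flux `Q + ∂ₓ²N` and source `f`.
The summand `∂ₓ²N` of the flux is kept apart because, tested against a weight varying on the length
scale `m`, it gains the factor `m⁻³` where `Q` only gains `m⁻¹`. -/
structure DispersiveBalance (F Q N f : ℝ → ℝ → ℝ) : Prop where
  contDiff_density : ContDiff ℝ ∞ (uncurry F)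
  contDiff_flux : ContDiff ℝ ∞ (uncurry Q)
  contDiff_dispersion : ContDiff ℝ ∞ (uncurry N)
  balance : ∀ t x, deriv (fun s => F s x) t + deriv (Q t) x + iteratedDeriv 3 (N t) x = f t x

namespace DispersiveBalance

variable {F Q N f F' Q' N' f' : ℝ → ℝ → ℝ}

lemma const_mul (h : DispersiveBalance F Q N f) (c : ℝ) :
    DispersiveBalance (fun t x => c * F t x) (fun t x => c * Q t x) (fun t x => c * N t x)
      (fun t x => c * f t x) where
  contDiff_density := contDiff_const.mul h.contDiff_density
  contDiff_flux := contDiff_const.mul h.contDiff_flux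
  contDiff_dispersion := contDiff_const.mul h.contDiff_dispersion
  balance t x := by
    simp only [deriv_const_mul_field', iteratedDeriv_const_mul_field]
    linear_combination c * h.balance t x

lemma add (h : DispersiveBalance F Q N f) (h' : DispersiveBalance F' Q' N' f') :
    DispersiveBalance (fun t x => F t x + F' t x) (fun t x => Q t x + Q' t x)
      (fun t x => N t x + N' t x) (fun t x => f t x + f' t x) where
  contDiff_density := h.contDiff_density.add h'.contDiff_density
  contDiff_flux := h.contDiff_flux.add h'.contDiff_flux
  contDiff_dispersion := h.contDiff_dispersion.add h'.contDiff_dispersion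
  balance t x := by
    have hd {G : ℝ → ℝ → ℝ} (hG : ContDiff ℝ ∞ (uncurry G)) : DifferentiableAt ℝ (G t) x :=
      (contDiff_slice hG t).differentiable (by simp) x
    have ht {G : ℝ → ℝ → ℝ} (hG : ContDiff ℝ ∞ (uncurry G)) :
        DifferentiableAt ℝ (fun s => G s x) t :=
      (contDiff_timeSlice hG x).differentiable (by simp) t
    have h3 {G : ℝ → ℝ → ℝ} (hG : ContDiff ℝ ∞ (uncurry G)) : ContDiffAt ℝ 3 (G t) x :=
      (contDiff_infty.1 (contDiff_slice hG t) 3).contDiffAt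
    rw [deriv_fun_add (ht h.contDiff_density) (ht h'.contDiff_density),
      deriv_fun_add (hd h.contDiff_flux) (hd h'.contDiff_flux),
      iteratedDeriv_fun_add (h3 h.contDiff_dispersion) (h3 h'.contDiff_dispersion)]
    linear_combination h.balance t x + h'.balance t x

lemma sub_flux (h : DispersiveBalance F Q N f) {G : ℝ → ℝ → ℝ} (hG : ContDiff ℝ ∞ (uncurry G))
    (hfG : ∀ t x, HasDerivAt (G t) (f t x) x) :
    DispersiveBalance F (fun t x => Q t x - G t x) N 0 where
  contDiff_density := h.contDiff_density
  contDiff_flux := h.contDiff_flux.sub hG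
  contDiff_dispersion := h.contDiff_dispersion
  balance t x := by
    have hQ : DifferentiableAt ℝ (Q t) x :=
      (contDiff_slice h.contDiff_flux t).differentiable (by simp) x
    rw [deriv_fun_sub hQ (hfG t x).differentiableAt, (hfG t x).deriv]
    rw [Pi.zero_apply, Pi.zero_apply]
    linear_combination h.balance t x

lemma integral_weight (h : DispersiveBalance F Q N 0) {w : ℝ → ℝ} {a b : ℝ} (hw : ContDiff ℝ ∞ w)
    (hsupp : tsupport w ⊆ Ioo a b) (T S : ℝ) :
    ∫ t in T..S, ∫ x in a..b, (Q t x * deriv w x + N t x * iteratedDeriv 3 w x) =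
      (∫ x in a..b, F S x * w x) - ∫ x in a..b, F T x * w x := by
  rw [← integral_integral_timeDeriv_mul (h.contDiff_density.of_le (by simp)) hw.continuous]
  congr 1 with t
  have hQ := contDiff_slice h.contDiff_flux t
  have hN := contDiff_slice h.contDiff_dispersion t
  have hint {f : ℝ → ℝ} (hf : Continuous f) : IntervalIntegrable f volume a b :=
    hf.intervalIntegrable a b
  have hN3 := (contDiff_infty.1 hN 3).continuous_iteratedDeriv 3 le_rfl
  have hw3 := (contDiff_infty.1 hw 3).continuous_iteratedDeriv 3 le_rfl
  have hQ1 := hQ.continuous_deriv (by simp)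
  have hw1 := hw.continuous_deriv (by simp)
  calc ∫ x in a..b, (Q t x * deriv w x + N t x * iteratedDeriv 3 w x)
      = (∫ x in a..b, Q t x * deriv w x) + ∫ x in a..b, N t x * iteratedDeriv 3 w x :=
        intervalIntegral.integral_add (hint (hQ.continuous.mul hw1)) (hint (hN.continuous.mul hw3))
    _ = -(∫ x in a..b, deriv (Q t) x * w x) - ∫ x in a..b, iteratedDeriv 3 (N t) x * w x := by
        have h1 := integral_iteratedDeriv_mul_eq hQ hw hsupp 1
        rw [iteratedDeriv_one, iteratedDeriv_one] at h1
        rw [h1, integral_iteratedDeriv_mul_eq hN hw hsupp 3]; ring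
    _ = ∫ x in a..b, (-(deriv (Q t) x * w x) - iteratedDeriv 3 (N t) x * w x) := by
        rw [← intervalIntegral.integral_neg]
        exact (intervalIntegral.integral_sub (hint (hQ1.mul hw.continuous).neg)
          (hint (hN3.mul hw.continuous))).symm
    _ = ∫ x in a..b, deriv (fun s => F s x) t * w x := by
        congr 1 with x
        have hbal := h.balance t x
        rw [Pi.zero_apply, Pi.zero_apply] at hbal
        linear_combination -(w x) * hbal

end DispersiveBalance

/-! ### Virial estimate -/

/-- A weight which has size at most `A`, lives on the scale `m` and increases with slope at least
`(2 * δ * m)⁻¹` on `[-δ * m, δ * m]`. The point of the notion is that `A` can be chosen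
independently of `δ` (`exists_isSteepWeight`): making the weight steeper near the origin does not
make its negative slopes worse. -/
structure IsSteepWeight (A B δ m : ℝ) (w : ℝ → ℝ) : Prop where
  contDiff : ContDiff ℝ ∞ w
  tsupport_subset : tsupport w ⊆ Ioo (-(3 * m)) (3 * m)
  abs_le : ∀ x, |w x| ≤ A
  le_deriv : ∀ x, -(A / m) ≤ deriv w x
  le_deriv_of_abs_le : ∀ x, |x| ≤ δ * m → (2 * δ * m)⁻¹ ≤ deriv w x
  abs_iteratedDeriv_le : ∀ x, |iteratedDeriv 3 w x| ≤ B / m ^ 3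

lemma IsSteepWeight.comp_inv_mul {A B δ m : ℝ} {w : ℝ → ℝ} (h : IsSteepWeight A B δ 1 w)
    (hm : 0 < m) : IsSteepWeight A B δ m fun x => w (m⁻¹ * x) where
  contDiff := h.contDiff.comp (contDiff_const.mul contDiff_id)
  tsupport_subset x hx := by
    have hx' := h.tsupport_subset
      (tsupport_comp_subset_preimage w (f := fun x => m⁻¹ * x) (by fun_prop) hx)
    have hmx : x = m * (m⁻¹ * x) := by field_simp
    rw [hmx]
    constructor <;> nlinarith [hx'.1, hx'.2]
  abs_le x := h.abs_le _
  le_deriv x := by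
    rw [deriv_comp_mul_left, smul_eq_mul, div_eq_inv_mul, ← mul_neg]
    exact mul_le_mul_of_nonneg_left (by simpa using h.le_deriv (m⁻¹ * x)) (by positivity)
  le_deriv_of_abs_le x hx := by
    have hx' : |m⁻¹ * x| ≤ δ * 1 := by
      rw [abs_mul, abs_of_pos (inv_pos.2 hm), mul_one, inv_mul_le_iff₀ hm]; linarith
    rw [deriv_comp_mul_left, smul_eq_mul, mul_inv_rev]
    exact mul_le_mul_of_nonneg_left (by simpa using h.le_deriv_of_abs_le _ hx') (by positivity)
  abs_iteratedDeriv_le x := by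
    rw [iteratedDeriv_comp_const_mul (contDiff_infty.1 h.contDiff 3), abs_mul, div_eq_inv_mul,
      abs_of_pos (by positivity), inv_pow]
    exact mul_le_mul_of_nonneg_left (by simpa using h.abs_iteratedDeriv_le (m⁻¹ * x))
      (by positivity)

lemma abs_arctan_le_two (x : ℝ) : |Real.arctan x| ≤ 2 :=
  abs_le.2 ⟨by linarith [Real.neg_pi_div_two_lt_arctan x, Real.pi_le_four],
    by linarith [Real.arctan_lt_pi_div_two x, Real.pi_le_four]⟩

lemma deriv_arctan_div_mul {χ : ℝ → ℝ} (hχ : Differentiable ℝ χ) (δ x : ℝ) :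
    deriv (fun x => Real.arctan (x / δ) * χ x) x =
      1 / (1 + (x / δ) ^ 2) * (1 / δ) * χ x + Real.arctan (x / δ) * deriv χ x :=
  (((hasDerivAt_id x).div_const δ).arctan.mul (hχ x).hasDerivAt).deriv

lemma exists_forall_abs_iteratedDeriv_le {f : ℝ → ℝ} (hf : ContDiff ℝ ∞ f)
    (hsupp : HasCompactSupport f) (n : ℕ) : ∃ B, ∀ x, |iteratedDeriv n f x| ≤ B := by
  have hcompact : HasCompactSupport (iteratedDeriv n f) := by
    induction n with
    | zero => simpa only [iteratedDeriv_zero] using hsupp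
    | succ n ih => simpa only [iteratedDeriv_succ] using ih.deriv
  exact hcompact.exists_bound_of_continuous
    ((contDiff_infty.1 hf n).continuous_iteratedDeriv n le_rfl)

lemma isSteepWeight_arctan_mul_bump (χ : ContDiffBump (0 : ℝ)) (hrIn : χ.rIn = 1)
    (hrOut : χ.rOut = 2) {D δ : ℝ} (hD : ∀ x, |deriv χ x| ≤ D) (hδ : 0 < δ) (hδ1 : δ ≤ 1) :
    ∃ B, IsSteepWeight (2 + 2 * D) B δ 1 fun x => Real.arctan (x / δ) * χ x := by
  have hsmooth : ContDiff ℝ ∞ fun x => Real.arctan (x / δ) * χ x :=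
    (Real.contDiff_arctan.comp (contDiff_id.div_const δ)).mul χ.contDiff
  have hsupp : tsupport (fun x => Real.arctan (x / δ) * χ x) ⊆ Metric.closedBall 0 2 := by
    simpa [χ.tsupport_eq, hrOut] using
      tsupport_mul_subset_right (f := fun x => Real.arctan (x / δ)) (g := χ)
  have hcompact : HasCompactSupport fun x => Real.arctan (x / δ) * χ x :=
    (isCompact_closedBall _ _).of_isClosed_subset (isClosed_tsupport _) hsupp
  have hderiv := deriv_arctan_div_mul (χ.contDiff.differentiable one_ne_zero) δ
  have hD0 : 0 ≤ D := (abs_nonneg _).trans (hD 0)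
  obtain ⟨B, hB⟩ := exists_forall_abs_iteratedDeriv_le hsmooth hcompact 3
  refine ⟨B, hsmooth, fun x hx => ?_, fun x => ?_, fun x => ?_, fun x hx => ?_, by simpa using hB⟩
  · have := abs_le.1 (mem_closedBall_zero_iff.1 (hsupp hx))
    constructor <;> linarith
  · rw [abs_mul, abs_of_nonneg χ.nonneg]
    nlinarith [abs_arctan_le_two (x / δ), χ.le_one (x := x), χ.nonneg (x := x)]
  · have hpos : 0 ≤ 1 / (1 + (x / δ) ^ 2) * (1 / δ) * χ x :=
      mul_nonneg (by positivity) χ.nonneg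
    have hbd : |Real.arctan (x / δ) * deriv χ x| ≤ 2 * D := by
      rw [abs_mul]
      exact mul_le_mul (abs_arctan_le_two _) (hD x) (abs_nonneg _) zero_le_two
    rw [hderiv, div_one]
    linarith [neg_abs_le (Real.arctan (x / δ) * deriv χ x)]
  · have hχ1 : χ x = 1 :=
      χ.one_of_mem_closedBall (by simpa [hrIn] using hx.trans (by linarith))
    have hχ' : deriv χ x = 0 :=
      IsLocalMax.deriv_eq_zero (Eventually.of_forall fun y => hχ1 ▸ χ.le_one)
    have hxδ : (x / δ) ^ 2 ≤ 1 := by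
      rw [sq_le_one_iff_abs_le_one, abs_div, abs_of_pos hδ, div_le_one hδ]; linarith
    rw [hderiv, hχ1, hχ', mul_zero, add_zero, mul_one, mul_one, ← one_div, ← one_div_mul_one_div]
    gcongr
    linarith

lemma exists_isSteepWeight : ∃ A > 0, ∀ δ ∈ Ioc (0 : ℝ) 1, ∃ B, ∀ m > 0,
    ∃ w, IsSteepWeight A B δ m w := by
  let χ : ContDiffBump (0 : ℝ) := ⟨1, 2, one_pos, one_lt_two⟩
  obtain ⟨D, hD⟩ := χ.hasCompactSupport.deriv.exists_bound_of_continuous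
    (χ.contDiff (n := 1)).continuous_deriv_one
  have hD0 : 0 ≤ D := (norm_nonneg _).trans (hD 0)
  refine ⟨2 + 2 * D, by positivity, fun δ hδ => ?_⟩
  obtain ⟨B, hB⟩ := isSteepWeight_arctan_mul_bump χ rfl rfl hD hδ.1 hδ.2
  exact ⟨B, fun m hm => ⟨_, hB.comp_inv_mul hm⟩⟩

lemma IsSteepWeight.integral_le_integral_mul {A B δ m : ℝ} {w f : ℝ → ℝ}
    (hw : IsSteepWeight A B δ m w) (hδ : 0 < δ) (hδ3 : δ ≤ 3) (hm : 0 < m) (hf : Continuous f)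
    (hf0 : ∀ x, 0 ≤ f x) :
    (2 * δ * m)⁻¹ * ∫ x in -(δ * m)..δ * m, f x ≤
      ∫ x in -(3 * m)..3 * m, f x * (deriv w x + A / m) := by
  have hw1 := hw.contDiff.continuous_deriv (by simp)
  have hA : 0 ≤ A := (abs_nonneg _).trans (hw.abs_le 0)
  have hδm : 0 < δ * m := mul_pos hδ hm
  have hδm3 : δ * m ≤ 3 * m := mul_le_mul_of_nonneg_right hδ3 hm.le
  have hslope (x : ℝ) : 0 ≤ deriv w x + A / m := by linarith [hw.le_deriv x]
  have hinner : ∀ x ∈ Icc (-(δ * m)) (δ * m),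
      (2 * δ * m)⁻¹ * f x ≤ f x * (deriv w x + A / m) := fun x hx => by
    have := hw.le_deriv_of_abs_le x (_root_.abs_le.2 hx)
    nlinarith [hf0 x, mul_nonneg (hf0 x) (div_nonneg hA hm.le)]
  calc (2 * δ * m)⁻¹ * ∫ x in -(δ * m)..δ * m, f x
      ≤ ∫ x in -(δ * m)..δ * m, f x * (deriv w x + A / m) := by
        rw [← intervalIntegral.integral_const_mul]
        exact intervalIntegral.integral_mono_on (by linarith)
          (Continuous.intervalIntegrable (by fun_prop) _ _)
          (Continuous.intervalIntegrable (by fun_prop) _ _) hinner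
    _ ≤ ∫ x in -(3 * m)..3 * m, f x * (deriv w x + A / m) :=
        intervalIntegral.integral_mono_interval (by linarith) (by linarith) hδm3
          (Eventually.of_forall fun x => mul_nonneg (hf0 x) (hslope x))
          (Continuous.intervalIntegrable (by fun_prop) _ _)

lemma abs_integral_mul_le {f w : ℝ → ℝ} {A R : ℝ} (hR : 0 ≤ R) (hf : Continuous f)
    (hw : Continuous w) (hwA : ∀ x, |w x| ≤ A) :
    |∫ x in -R..R, f x * w x| ≤ A * ∫ x in -R..R, |f x| := by
  have hle (x : ℝ) : |f x * w x| ≤ A * |f x| := by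
    rw [abs_mul, mul_comm]
    exact mul_le_mul_of_nonneg_right (hwA x) (abs_nonneg _)
  rw [← intervalIntegral.integral_const_mul]
  exact (intervalIntegral.abs_integral_le_integral_abs (by linarith)).trans
    (intervalIntegral.integral_mono_on (by linarith)
      (Continuous.intervalIntegrable (by fun_prop) _ _)
      (Continuous.intervalIntegrable (by fun_prop) _ _) fun x _ => hle x)

namespace DispersiveBalance

variable {F Q N : ℝ → ℝ → ℝ} {A B C b δ m T S : ℝ} {w : ℝ → ℝ}

lemma integral_flux_le_at_time (h : DispersiveBalance F Q N 0) (hw : IsSteepWeight A B δ m w)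
    (hδ : 0 < δ) (hδ3 : δ ≤ 3) (hm : 0 < m) {t : ℝ} (hQ : ∀ x, 0 ≤ Q t x)
    (hQC : ∫ x in -(3 * m)..3 * m, Q t x ≤ C) (hNb : ∫ x in -(3 * m)..3 * m, |N t x| ≤ b) :
    (2 * δ * m)⁻¹ * ∫ x in -(δ * m)..δ * m, Q t x ≤
      (∫ x in -(3 * m)..3 * m, (Q t x * deriv w x + N t x * iteratedDeriv 3 w x)) +
        (A / m * C + B / m ^ 3 * b) := by
  have hQc := (contDiff_slice h.contDiff_flux t).continuous
  have hNc := (contDiff_slice h.contDiff_dispersion t).continuous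
  have hw1 := hw.contDiff.continuous_deriv (by simp)
  have hw3 := (contDiff_infty.1 hw.contDiff 3).continuous_iteratedDeriv 3 le_rfl
  have hA : 0 ≤ A := (abs_nonneg _).trans (hw.abs_le 0)
  have hB : 0 ≤ B / m ^ 3 := (abs_nonneg _).trans (hw.abs_iteratedDeriv_le 0)
  have hsplit : ∫ x in -(3 * m)..3 * m, Q t x * (deriv w x + A / m) =
      (∫ x in -(3 * m)..3 * m, (Q t x * deriv w x + N t x * iteratedDeriv 3 w x)) +
        A / m * (∫ x in -(3 * m)..3 * m, Q t x) -
        ∫ x in -(3 * m)..3 * m, N t x * iteratedDeriv 3 w x := by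
    rw [← intervalIntegral.integral_const_mul, ← intervalIntegral.integral_add,
      ← intervalIntegral.integral_sub]
    · congr 1 with x
      ring
    all_goals exact Continuous.intervalIntegrable (by fun_prop) _ _
  have hdisp := (abs_integral_mul_le (by positivity) hNc hw3 hw.abs_iteratedDeriv_le).trans
    (mul_le_mul_of_nonneg_left hNb hB)
  have hflux := mul_le_mul_of_nonneg_left hQC (div_nonneg hA hm.le)
  refine (hw.integral_le_integral_mul hδ hδ3 hm hQc hQ).trans ?_
  linarith [neg_le_of_abs_le hdisp]

lemma integral_integral_flux_le (h : DispersiveBalance F Q N 0) (hw : IsSteepWeight A B δ m w)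
    (hδ : 0 < δ) (hδ3 : δ ≤ 3) (hm : 0 < m) (hTS : T ≤ S)
    (hQ : ∀ t x, 0 ≤ Q t x) (hQC : ∀ t, ∫ x in -(3 * m)..3 * m, Q t x ≤ C)
    (hFb : ∀ t, ∫ x in -(3 * m)..3 * m, |F t x| ≤ b)
    (hNb : ∀ t, ∫ x in -(3 * m)..3 * m, |N t x| ≤ b) :
    ∫ t in T..S, ∫ x in -(δ * m)..δ * m, Q t x ≤
      2 * δ * m * (2 * A * b + (S - T) * (A / m * C + B / m ^ 3 * b)) := by
  have hQc := h.contDiff_flux.continuous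
  have hNc := h.contDiff_dispersion.continuous
  have hw1 := hw.contDiff.continuous_deriv (by simp)
  have hw3 := (contDiff_infty.1 hw.contDiff 3).continuous_iteratedDeriv 3 le_rfl
  have hvirial : Continuous fun t =>
      ∫ x in -(3 * m)..3 * m, (Q t x * deriv w x + N t x * iteratedDeriv 3 w x) :=
    intervalIntegral.continuous_parametric_intervalIntegral_of_continuous'
      (by simp only [uncurry_def] at *; fun_prop) _ _
  have hA : 0 ≤ A := (abs_nonneg _).trans (hw.abs_le 0)
  have hboundary (t : ℝ) : |∫ x in -(3 * m)..3 * m, F t x * w x| ≤ A * b :=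
    (abs_integral_mul_le (by positivity) (contDiff_slice h.contDiff_density t).continuous
      hw.contDiff.continuous hw.abs_le).trans (mul_le_mul_of_nonneg_left (hFb t) hA)
  have hint : ∫ t in T..S, (2 * δ * m)⁻¹ * ∫ x in -(δ * m)..δ * m, Q t x ≤
      ∫ t in T..S, ((∫ x in -(3 * m)..3 * m, (Q t x * deriv w x + N t x * iteratedDeriv 3 w x)) +
        (A / m * C + B / m ^ 3 * b)) :=
    intervalIntegral.integral_mono_on hTS (Continuous.intervalIntegrable (by fun_prop) _ _)
      (Continuous.intervalIntegrable (by fun_prop) _ _) fun t _ =>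
        h.integral_flux_le_at_time hw hδ hδ3 hm (hQ t) (hQC t) (hNb t)
  rw [intervalIntegral.integral_const_mul, intervalIntegral.integral_add
    (hvirial.intervalIntegrable _ _) intervalIntegrable_const,
    h.integral_weight hw.contDiff hw.tsupport_subset, intervalIntegral.integral_const, smul_eq_mul,
    inv_mul_le_iff₀ (by positivity)] at hint
  refine hint.trans (mul_le_mul_of_nonneg_left ?_ (by positivity))
  linarith [abs_le.1 (hboundary S), abs_le.1 (hboundary T)]

end DispersiveBalance

/-! ### From time averages to the lower limit -/

namespace DispersiveBalance

variable {F Q N : ℝ → ℝ → ℝ} {A B C δ : ℝ}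

lemma integral_flux_le_of_sqrt_growth (h : DispersiveBalance F Q N 0) (hQ : ∀ t x, 0 ≤ Q t x)
    (hQC : ∀ t, ∀ R ≥ 1, ∫ x in -R..R, Q t x ≤ C)
    (hFC : ∀ t, ∀ R ≥ 1, ∫ x in -R..R, |F t x| ≤ C * √R)
    (hNC : ∀ t, ∀ R ≥ 1, ∫ x in -R..R, |N t x| ≤ C * √R) {s : ℝ} {w : ℝ → ℝ} (hs : 1 ≤ s)
    (hδ : 0 < δ) (hδ3 : δ ≤ 3) (hw : IsSteepWeight A B δ (s ^ 2) w) :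
    ∫ t in s ^ 3..2 * s ^ 3, ∫ x in -(δ * s ^ 2)..δ * s ^ 2, Q t x ≤
      δ * (10 * A * C * s ^ 3 + 4 * B * C) := by
  have hs0 : 0 < s := one_pos.trans_le hs
  have hC : 0 ≤ C := (intervalIntegral.integral_nonneg (by norm_num) fun x _ => hQ 0 x).trans
    (hQC 0 1 le_rfl)
  have hR : 1 ≤ 3 * s ^ 2 := by nlinarith
  have hsqrt : C * √(3 * s ^ 2) ≤ 2 * C * s := by
    rw [mul_comm 2, mul_assoc]
    exact mul_le_mul_of_nonneg_left (Real.sqrt_le_iff.2 ⟨by positivity, by nlinarith⟩) hC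
  refine (h.integral_integral_flux_le hw hδ hδ3 (by positivity) (by linarith [pow_pos hs0 3]) hQ
    (fun t => hQC t _ hR) (fun t => (hFC t _ hR).trans hsqrt)
    fun t => (hNC t _ hR).trans hsqrt).trans_eq ?_
  field_simp
  ring

lemma eventually_integral_flux_le (h : DispersiveBalance F Q N 0) (hQ : ∀ t x, 0 ≤ Q t x)
    (hQC : ∀ t, ∀ R ≥ 1, ∫ x in -R..R, Q t x ≤ C)
    (hFC : ∀ t, ∀ R ≥ 1, ∫ x in -R..R, |F t x| ≤ C * √R)
    (hNC : ∀ t, ∀ R ≥ 1, ∫ x in -R..R, |N t x| ≤ C * √R) {ε : ℝ} (hε : 0 < ε) :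
    ∃ δ > 0, ∀ᶠ T in atTop,
      ∫ t in T..2 * T, ∫ x in -(δ * T ^ (2 / 3 : ℝ))..δ * T ^ (2 / 3 : ℝ), Q t x ≤ ε * T := by
  have hC : 0 ≤ C := (intervalIntegral.integral_nonneg (by norm_num) fun x _ => hQ 0 x).trans
    (hQC 0 1 le_rfl)
  obtain ⟨A, hA, hweight⟩ := exists_isSteepWeight
  obtain ⟨δ, hδ, hδ1, hδε⟩ : ∃ δ > 0, δ ≤ 1 ∧ δ * (10 * A * C) ≤ ε / 2 := by
    refine ⟨min 1 (ε / (20 * A * C + 1)), by positivity, min_le_left _ _, ?_⟩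
    calc min 1 (ε / (20 * A * C + 1)) * (10 * A * C)
        ≤ ε / (20 * A * C + 1) * (10 * A * C) := by gcongr; exact min_le_right _ _
      _ ≤ ε / 2 := by
        rw [div_mul_eq_mul_div, div_le_div_iff₀ (by positivity) two_pos]; nlinarith
  obtain ⟨B, hB⟩ := hweight δ ⟨hδ, hδ1⟩
  refine ⟨δ, hδ, ?_⟩
  filter_upwards [eventually_ge_atTop 1, eventually_ge_atTop (8 * δ * B * C / ε)] with T hT1 hTB
  have hT : 0 ≤ T := zero_le_one.trans hT1
  have hcube : (T ^ (1 / 3 : ℝ)) ^ 3 = T := by rw [← Real.rpow_mul_natCast hT]; norm_num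
  have hsquare : (T ^ (1 / 3 : ℝ)) ^ 2 = T ^ (2 / 3 : ℝ) := by
    rw [← Real.rpow_mul_natCast hT]; norm_num
  have hs : 1 ≤ T ^ (1 / 3 : ℝ) := Real.one_le_rpow hT1 (by norm_num)
  obtain ⟨w, hw⟩ := hB ((T ^ (1 / 3 : ℝ)) ^ 2) (by positivity)
  have hle := h.integral_flux_le_of_sqrt_growth hQ hQC hFC hNC hs hδ (by linarith) hw
  rw [hcube, hsquare] at hle
  rw [div_le_iff₀ hε] at hTB
  nlinarith

end DispersiveBalance

lemma setOf_abs_le_eq_Icc (r : ℝ) : {x : ℝ | |x| ≤ r} = Icc (-r) r :=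
  by ext; simp [abs_le]

lemma setIntegral_abs_le_eq_intervalIntegral (f : ℝ → ℝ) {r : ℝ} (hr : 0 ≤ r) :
    ∫ x in {x : ℝ | |x| ≤ r}, f x = ∫ x in -r..r, f x := by
  rw [setOf_abs_le_eq_Icc, integral_Icc_eq_integral_Ioc,
    intervalIntegral.integral_of_le (by linarith)]

lemma eventually_forall_Icc_le_mul_rpow {ρ : ℝ → ℝ} {p δ : ℝ} (hp : 0 ≤ p) (hδ : 0 < δ)
    (hρ : ρ =o[atTop] fun t => t ^ p) :
    ∀ᶠ T in atTop, ∀ t ∈ Icc T (2 * T), ρ t ≤ δ * T ^ p := by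
  obtain ⟨T₀, hT₀⟩ := eventually_atTop.1 (hρ.bound (c := δ / 2 ^ p) (by positivity))
  filter_upwards [eventually_ge_atTop T₀, eventually_gt_atTop 0] with T hT hT0 t ht
  have ht0 : 0 ≤ t := hT0.le.trans ht.1
  calc ρ t ≤ δ / 2 ^ p * ‖t ^ p‖ := (le_abs_self _).trans (hT₀ t (hT.trans ht.1))
    _ = δ / 2 ^ p * t ^ p := by rw [Real.norm_of_nonneg (Real.rpow_nonneg ht0 p)]
    _ ≤ δ / 2 ^ p * (2 * T) ^ p := by gcongr; exact ht.2
    _ = δ * T ^ p := by rw [Real.mul_rpow two_pos.le hT0.le]; field_simp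

lemma frequently_setIntegral_abs_le_le {f : ℝ → ℝ → ℝ} {p ε δ : ℝ} {ρ : ℝ → ℝ}
    (hf : Continuous (uncurry f)) (hf0 : ∀ t x, 0 ≤ f t x) (hp : 0 ≤ p) (hδ : 0 < δ)
    (hρ : ρ =o[atTop] fun t => t ^ p)
    (havg : ∀ᶠ T in atTop, ∫ t in T..2 * T, ∫ x in -(δ * T ^ p)..δ * T ^ p, f t x ≤ ε * T) :
    ∃ᶠ t in atTop, ∫ x in {x | |x| ≤ ρ t}, f t x ≤ ε := by
  intro hlarge
  obtain ⟨T₀, hT₀⟩ := eventually_atTop.1 hlarge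
  obtain ⟨T, hTavg, hTρ, hTT₀, hT0⟩ := (havg.and ((eventually_forall_Icc_le_mul_rpow hp hδ hρ).and
    ((eventually_ge_atTop T₀).and (eventually_gt_atTop 0)))).exists
  have hinner : Continuous fun t => ∫ x in -(δ * T ^ p)..δ * T ^ p, f t x :=
    intervalIntegral.continuous_parametric_intervalIntegral_of_continuous' hf _ _
  have hgt : ∀ t ∈ Icc T (2 * T), ε < ∫ x in -(δ * T ^ p)..δ * T ^ p, f t x := fun t ht => by
    have hint : IntegrableOn (f t) {x | |x| ≤ δ * T ^ p} := by
      rw [setOf_abs_le_eq_Icc]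
      exact hf.uncurry_left t |>.integrableOn_Icc
    rw [← setIntegral_abs_le_eq_intervalIntegral _ (by positivity)]
    exact (not_le.1 (hT₀ t (hTT₀.trans ht.1))).trans_le (setIntegral_mono_set hint
      (Eventually.of_forall (hf0 t)) (Eventually.of_forall fun x hx => le_trans hx (hTρ t ht)))
  have hcontra := intervalIntegral.integral_lt_integral_of_continuousOn_of_le_of_exists_lt
    (a := T) (b := 2 * T) (by linarith) continuousOn_const hinner.continuousOn
    (fun t ht => (hgt t (Ioc_subset_Icc_self ht)).le)
    ⟨T, left_mem_Icc.2 (by linarith), hgt T (left_mem_Icc.2 (by linarith))⟩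
  rw [intervalIntegral.integral_const, smul_eq_mul] at hcontra
  linarith

lemma liminf_setIntegral_abs_le_eq_zero {f : ℝ → ℝ → ℝ} {p : ℝ} {ρ : ℝ → ℝ}
    (hf : Continuous (uncurry f)) (hf0 : ∀ t x, 0 ≤ f t x) (hp : 0 ≤ p)
    (hρ : ρ =o[atTop] fun t => t ^ p)
    (havg : ∀ ε > 0, ∃ δ > 0, ∀ᶠ T in atTop,
      ∫ t in T..2 * T, ∫ x in -(δ * T ^ p)..δ * T ^ p, f t x ≤ ε * T) :
    liminf (fun t => ∫ x in {x | |x| ≤ ρ t}, f t x) atTop = 0 := by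
  have hnonneg (t : ℝ) : 0 ≤ ∫ x in {x | |x| ≤ ρ t}, f t x := integral_nonneg (hf0 t)
  have hfreq (ε : ℝ) (hε : 0 < ε) : ∃ᶠ t in atTop, ∫ x in {x | |x| ≤ ρ t}, f t x ≤ ε := by
    obtain ⟨δ, hδ, hT⟩ := havg ε hε
    exact frequently_setIntegral_abs_le_le hf hf0 hp hδ hρ hT
  have hbdd : IsBoundedUnder (· ≥ ·) atTop fun t => ∫ x in {x | |x| ≤ ρ t}, f t x :=
    isBoundedUnder_of ⟨0, hnonneg⟩
  refine le_antisymm (le_of_forall_pos_le_add fun ε hε => ?_) ?_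
  · rw [zero_add]
    exact liminf_le_of_frequently_le (hfreq ε hε) hbdd
  · exact le_liminf_of_le (IsCoboundedUnder.of_frequently_le (hfreq 1 one_pos))
      (Eventually.of_forall hnonneg)

/-! ### Local conservation laws of the system -/

section Calculus

variable {E : Type*} [NormedAddCommGroup E]

lemma hasDerivAt_iteratedDeriv [NormedSpace ℝ E] {f : ℝ → E} (hf : ContDiff ℝ ∞ f) (n : ℕ)
    (x : ℝ) : HasDerivAt (iteratedDeriv n f) (iteratedDeriv (n + 1) f x) x := by
  rw [iteratedDeriv_succ, iteratedDeriv_eq_iterate]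
  exact ((hf.iterate_deriv n).differentiable (by simp) x).hasDerivAt

lemma iteratedDeriv_three_norm_sq [InnerProductSpace ℝ E] {f : ℝ → E} (hf : ContDiff ℝ ∞ f)
    (x : ℝ) : iteratedDeriv 3 (fun y => ‖f y‖ ^ 2) x =
      2 * ⟪f x, iteratedDeriv 3 f x⟫_ℝ + 6 * ⟪deriv f x, iteratedDeriv 2 f x⟫_ℝ := by
  have h0 (y : ℝ) : HasDerivAt f (iteratedDeriv 1 f y) y := by
    simpa using hasDerivAt_iteratedDeriv hf 0 y
  have h1 := hasDerivAt_iteratedDeriv hf 1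
  have h2 := hasDerivAt_iteratedDeriv hf 2
  have hd1 : deriv (fun y => ‖f y‖ ^ 2) = fun y => 2 * ⟪f y, iteratedDeriv 1 f y⟫_ℝ :=
    deriv_eq fun y => (h0 y).norm_sq
  have hd2 : deriv (fun y => 2 * ⟪f y, iteratedDeriv 1 f y⟫_ℝ) =
      fun y => 2 * (⟪f y, iteratedDeriv 2 f y⟫_ℝ + ⟪iteratedDeriv 1 f y, iteratedDeriv 1 f y⟫_ℝ) :=
    deriv_eq fun y => ((h0 y).inner ℝ (h1 y)).const_mul 2
  have hd3 := (((h0 x).inner ℝ (h2 x)).add ((h1 x).inner ℝ (h1 x))).const_mul 2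
  rw [iteratedDeriv_succ, iteratedDeriv_succ, iteratedDeriv_one, hd1, hd2]
  refine hd3.deriv.trans ?_
  rw [← iteratedDeriv_one, real_inner_comm (iteratedDeriv 1 f x)]
  ring

end Calculus

lemma hasDerivAt_schrodinger_momentum {u : ℝ → ℝ → ℂ} {V : ℝ → ℝ} {t : ℝ}
    (hu : ContDiff ℝ ∞ (uncurry u)) (hV : Differentiable ℝ V)
    (heq : ∀ x, Complex.I * deriv (fun s => u s x) t + iteratedDeriv 2 (u t) x = V x • u t x)
    (x : ℝ) :
    HasDerivAt (fun s => ⟪Complex.I * u s x, deriv (u s) x⟫_ℝ)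
      (⟪u t x, iteratedDeriv 3 (u t) x⟫_ℝ - ⟪iteratedDeriv 2 (u t) x, deriv (u t) x⟫_ℝ -
        deriv V x * ‖u t x‖ ^ 2) t := by
  have hut := contDiff_slice hu t
  have hI_ut : Complex.I * deriv (fun s => u s x) t = V x • u t x - iteratedDeriv 2 (u t) x :=
    eq_sub_of_add_eq (heq x)
  have hut_eq : (fun y => deriv (fun s => u s y) t) =
      fun y => Complex.I * (iteratedDeriv 2 (u t) y - V y • u t y) := by
    funext y
    linear_combination (-Complex.I) * heq y + deriv (fun s => u s y) t * Complex.I_mul_I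
  have hux : HasDerivAt (u t) (deriv (u t) x) x := (hut.differentiable (by simp) x).hasDerivAt
  have hutx : deriv (fun y => deriv (fun s => u s y) t) x =
      Complex.I * (iteratedDeriv 3 (u t) x - (V x • deriv (u t) x + deriv V x • u t x)) := by
    rw [hut_eq]
    exact (((hasDerivAt_iteratedDeriv hut 2 x).sub
      ((hV x).hasDerivAt.smul hux)).const_mul Complex.I).deriv
  have hinner (z w : ℂ) : ⟪Complex.I * z, Complex.I * w⟫_ℝ = ⟪z, w⟫_ℝ := by
    simp [Complex.inner]
  have htime : HasDerivAt (fun s => u s x) (deriv (fun s => u s x) t) t :=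
    ((contDiff_timeSlice hu x).differentiable (by simp) t).hasDerivAt
  refine ((htime.const_mul Complex.I).inner ℝ (hasDerivAt_deriv_timeSlice hu t x)).congr_deriv ?_
  rw [hutx, hI_ut, hinner, inner_sub_left, inner_sub_right, inner_add_right, real_inner_smul_left,
    real_inner_smul_right, real_inner_smul_right, real_inner_self_eq_norm_sq]
  ring

namespace DispersiveBalance

lemma schrodinger_momentum {u : ℝ → ℝ → ℂ} {V : ℝ → ℝ → ℝ} (hu : ContDiff ℝ ∞ (uncurry u))
    (hV : ∀ t, Differentiable ℝ (V t)) (heq : ∀ t x,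
      Complex.I * deriv (fun s => u s x) t + iteratedDeriv 2 (u t) x = V t x • u t x) :
    DispersiveBalance (fun t x => ⟪Complex.I * u t x, deriv (u t) x⟫_ℝ)
      (fun t x => 2 * ‖deriv (u t) x‖ ^ 2) (fun t x => -1 / 2 * ‖u t x‖ ^ 2)
      (fun t x => -(deriv (V t) x * ‖u t x‖ ^ 2)) where
  contDiff_density := (contDiff_const.mul hu).inner ℝ (contDiff_uncurry_deriv hu le_rfl)
  contDiff_flux := contDiff_const.mul ((contDiff_uncurry_deriv hu le_rfl).norm_sq ℝ)
  contDiff_dispersion := contDiff_const.mul (hu.norm_sq ℝ)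
  balance t x := by
    have hut := contDiff_slice hu t
    have huxx : HasDerivAt (deriv (u t)) (iteratedDeriv 2 (u t) x) x := by
      simpa using hasDerivAt_iteratedDeriv hut 1 x
    rw [(hasDerivAt_schrodinger_momentum hu (hV t) (heq t) x).deriv,
      (huxx.norm_sq.const_mul 2).deriv, iteratedDeriv_const_mul_field,
      iteratedDeriv_three_norm_sq hut, real_inner_comm (deriv (u t) x)]
    ring

variable {v f : ℝ → ℝ → ℝ}

lemma kdv_mass (hv : ContDiff ℝ ∞ (uncurry v)) (heq : ∀ t x,
      deriv (fun s => v s x) t + iteratedDeriv 3 (v t) x + v t x * deriv (v t) x = f t x) :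
    DispersiveBalance v (fun t x => 1 / 2 * v t x ^ 2) v f where
  contDiff_density := hv
  contDiff_flux := contDiff_const.mul (hv.pow 2)
  contDiff_dispersion := hv
  balance t x := by
    have hvx := ((contDiff_slice hv t).differentiable (by simp) x).hasDerivAt
    rw [((hvx.fun_pow 2).const_mul (1 / 2)).deriv]
    linear_combination heq t x

lemma kdv_energy (hv : ContDiff ℝ ∞ (uncurry v)) (heq : ∀ t x,
      deriv (fun s => v s x) t + iteratedDeriv 3 (v t) x + v t x * deriv (v t) x = f t x) :
    DispersiveBalance (fun t x => v t x ^ 2)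
      (fun t x => -3 * deriv (v t) x ^ 2 + 2 / 3 * v t x ^ 3) (fun t x => v t x ^ 2)
      (fun t x => 2 * v t x * f t x) where
  contDiff_density := hv.pow 2
  contDiff_flux := (contDiff_const.mul ((contDiff_uncurry_deriv hv le_rfl).pow 2)).add
    (contDiff_const.mul (hv.pow 3))
  contDiff_dispersion := hv.pow 2
  balance t x := by
    have hvt := ((contDiff_timeSlice hv x).differentiable (by simp) t).hasDerivAt
    have hvx := ((contDiff_slice hv t).differentiable (by simp) x).hasDerivAt
    have hvxx : HasDerivAt (deriv (v t)) (iteratedDeriv 2 (v t) x) x := by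
      simpa using hasDerivAt_iteratedDeriv (contDiff_slice hv t) 1 x
    have hvxxx : iteratedDeriv 3 (fun y => v t y ^ 2) x =
        2 * (iteratedDeriv 3 (v t) x * v t x) + 6 * (iteratedDeriv 2 (v t) x * deriv (v t) x) := by
      simpa using iteratedDeriv_three_norm_sq (contDiff_slice hv t) x
    rw [(hvt.fun_pow 2).deriv, hvxxx,
      (((hvxx.fun_pow 2).const_mul (-3)).fun_add ((hvx.fun_pow 3).const_mul (2 / 3))).deriv]
    push_cast
    linear_combination 2 * v t x * heq t x

end DispersiveBalance

namespace IsSKdVSolution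

variable {α β γ : ℝ} {u : ℝ → ℝ → ℂ} {v : ℝ → ℝ → ℝ}

lemma contDiff_fst (h : IsSKdVSolution α β γ u v) : ContDiff ℝ ∞ (uncurry u) := h.1

lemma contDiff_snd (h : IsSKdVSolution α β γ u v) : ContDiff ℝ ∞ (uncurry v) := h.2.1

lemma schrodinger (h : IsSKdVSolution α β γ u v) (t x : ℝ) :
    Complex.I * deriv (fun s => u s x) t + iteratedDeriv 2 (u t) x =
      (α * v t x + β * ‖u t x‖ ^ 2) • u t x := by
  rw [h.2.2.2.2.1 t x, Complex.real_smul]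
  push_cast
  ring

lemma kdv (h : IsSKdVSolution α β γ u v) (t x : ℝ) :
    deriv (fun s => v s x) t + iteratedDeriv 3 (v t) x + v t x * deriv (v t) x =
      γ * deriv (fun y => ‖u t y‖ ^ 2) x := h.2.2.2.2.2.1 t x

lemma contDiff_uncurry_norm_sq (h : IsSKdVSolution α β γ u v) :
    ContDiff ℝ ∞ (uncurry fun t x => ‖u t x‖ ^ 2) :=
  h.contDiff_fst.norm_sq ℝ

lemma differentiable_potential (h : IsSKdVSolution α β γ u v) (t : ℝ) :
    Differentiable ℝ fun x => α * v t x + β * ‖u t x‖ ^ 2 :=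
  (((contDiff_slice h.contDiff_snd t).differentiable (by simp)).const_mul α).add
    (((contDiff_slice h.contDiff_uncurry_norm_sq t).differentiable (by simp)).const_mul β)

lemma hasDerivAt_fst_norm_sq (h : IsSKdVSolution α β γ u v) (t x : ℝ) :
    HasDerivAt (fun y => ‖u t y‖ ^ 2) (deriv (fun y => ‖u t y‖ ^ 2) x) x :=
  ((contDiff_slice h.contDiff_uncurry_norm_sq t).differentiable (by simp) x).hasDerivAt

lemma mass_balance (h : IsSKdVSolution α β γ u v) :
    DispersiveBalance v (fun t x => 1 / 2 * v t x ^ 2 - γ * ‖u t x‖ ^ 2) v 0 :=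
  (DispersiveBalance.kdv_mass h.contDiff_snd h.kdv).sub_flux
    (contDiff_const.mul h.contDiff_uncurry_norm_sq)
    fun t x => (h.hasDerivAt_fst_norm_sq t x).const_mul γ

lemma momentum_balance (h : IsSKdVSolution α β γ u v) :
    DispersiveBalance
      (fun t x => α * v t x ^ 2 + -2 * γ * ⟪Complex.I * u t x, deriv (u t) x⟫_ℝ)
      (fun t x => α * (-3 * deriv (v t) x ^ 2 + 2 / 3 * v t x ^ 3) +
        -2 * γ * (2 * ‖deriv (u t) x‖ ^ 2) -
        (2 * α * γ * (v t x * ‖u t x‖ ^ 2) + β * γ * (‖u t x‖ ^ 2) ^ 2))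
      (fun t x => α * v t x ^ 2 + -2 * γ * (-1 / 2 * ‖u t x‖ ^ 2)) 0 := by
  have hρ := h.contDiff_uncurry_norm_sq
  refine (((DispersiveBalance.kdv_energy h.contDiff_snd h.kdv).const_mul α).add
    ((DispersiveBalance.schrodinger_momentum h.contDiff_fst h.differentiable_potential
      h.schrodinger).const_mul (-2 * γ))).sub_flux
    ((contDiff_const.mul (h.contDiff_snd.mul hρ)).add (contDiff_const.mul (hρ.pow 2)))
    fun t x => ?_
  have hvx := ((contDiff_slice h.contDiff_snd t).differentiable (by simp) x).hasDerivAt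
  have hρx := h.hasDerivAt_fst_norm_sq t x
  rw [((hvx.const_mul α).fun_add (hρx.const_mul β)).deriv]
  refine (((hvx.mul hρx).const_mul (2 * α * γ)).add ((hρx.pow 2).const_mul (β * γ))).congr_deriv ?_
  push_cast
  ring

end IsSKdVSolution

/-! ### The energy space -/

lemma norm_sq_le_integral_norm_sq_add {E : Type*} [NormedAddCommGroup E] [InnerProductSpace ℝ E]
    {f : ℝ → E} (hf : Differentiable ℝ f) (hf2 : Integrable fun x => ‖f x‖ ^ 2)
    (hf2' : Integrable fun x => ‖deriv f x‖ ^ 2) (x : ℝ) :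
    ‖f x‖ ^ 2 ≤ (∫ y, ‖f y‖ ^ 2) + ∫ y, ‖deriv f y‖ ^ 2 := by
  have hderiv (y : ℝ) : HasDerivAt (fun z => ‖f z‖ ^ 2) (deriv (fun z => ‖f z‖ ^ 2) y) y :=
    (hf.norm_sq ℝ y).hasDerivAt
  have hle (y : ℝ) : |deriv (fun z => ‖f z‖ ^ 2) y| ≤ ‖f y‖ ^ 2 + ‖deriv f y‖ ^ 2 := by
    rw [(hf y).hasDerivAt.norm_sq.deriv, abs_mul, abs_two]
    nlinarith [abs_real_inner_le_norm (f y) (deriv f y), sq_nonneg (‖f y‖ - ‖deriv f y‖)]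
  have hint : Integrable (deriv fun z => ‖f z‖ ^ 2) :=
    (hf2.add hf2').mono' (aestronglyMeasurable_deriv _ _) (Eventually.of_forall hle)
  have hlim := tendsto_zero_of_hasDerivAt_of_integrableOn_Iic (a := x) (fun y _ => hderiv y)
    hint.integrableOn hf2.integrableOn
  calc ‖f x‖ ^ 2 = ∫ y in Iic x, deriv (fun z => ‖f z‖ ^ 2) y := by
        rw [integral_Iic_of_hasDerivAt_of_tendsto' (fun y _ => hderiv y) hint.integrableOn hlim,
          sub_zero]
    _ ≤ ∫ y in Iic x, (‖f y‖ ^ 2 + ‖deriv f y‖ ^ 2) :=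
        setIntegral_mono hint.integrableOn (hf2.add hf2').integrableOn
          fun y => (le_abs_self _).trans (hle y)
    _ ≤ ∫ y, (‖f y‖ ^ 2 + ‖deriv f y‖ ^ 2) :=
        setIntegral_le_integral (hf2.add hf2') (Eventually.of_forall fun y => by positivity)
    _ = (∫ y, ‖f y‖ ^ 2) + ∫ y, ‖deriv f y‖ ^ 2 := integral_add hf2 hf2'

lemma intervalIntegral_le_integral {f : ℝ → ℝ} (hf : Integrable f) (hf0 : ∀ x, 0 ≤ f x) {a b : ℝ}
    (hab : a ≤ b) : ∫ x in a..b, f x ≤ ∫ x, f x := by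
  rw [intervalIntegral.integral_of_le hab]
  exact setIntegral_le_integral hf (Eventually.of_forall hf0)

lemma integral_abs_le_mul_sqrt {f : ℝ → ℝ} (hf : Continuous f) (hf2 : Integrable fun x => f x ^ 2)
    {R : ℝ} (hR : 0 < R) : ∫ x in -R..R, |f x| ≤ ((∫ x, f x ^ 2) + 1) * √R := by
  have hle (x : ℝ) : |f x| ≤ √R * f x ^ 2 + (2 * √R)⁻¹ := by
    have hsq : √R * f x ^ 2 + (2 * √R)⁻¹ - |f x| =
        (2 * √R)⁻¹ * ((√R * |f x|) ^ 2 + (√R * |f x| - 1) ^ 2) := by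
      rw [← sq_abs (f x)]; field_simp; ring
    rw [← sub_nonneg, hsq]
    positivity
  calc ∫ x in -R..R, |f x| ≤ ∫ x in -R..R, (√R * f x ^ 2 + (2 * √R)⁻¹) :=
        intervalIntegral.integral_mono_on (by linarith)
          (Continuous.intervalIntegrable (by fun_prop) _ _)
          (Continuous.intervalIntegrable (by fun_prop) _ _) fun x _ => hle x
    _ = √R * (∫ x in -R..R, f x ^ 2) + √R := by
        rw [intervalIntegral.integral_add (Continuous.intervalIntegrable (by fun_prop) _ _)
          intervalIntegrable_const, intervalIntegral.integral_const_mul,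
          intervalIntegral.integral_const, smul_eq_mul]
        congr 1
        field_simp
        linarith [Real.sq_sqrt hR.le]
    _ ≤ ((∫ x, f x ^ 2) + 1) * √R := by
        rw [add_one_mul, mul_comm]
        gcongr
        exact intervalIntegral_le_integral hf2 (fun x => sq_nonneg _) (by linarith)

lemma integrable_norm_sq_schwartzMap {E : Type*} [NormedAddCommGroup E] [NormedSpace ℝ E]
    (f : SchwartzMap ℝ E) : Integrable fun x => ‖f x‖ ^ 2 :=
  (f.memLp 2).integrable_norm_pow two_ne_zero

lemma integrable_norm_sq_deriv_schwartzMap {E : Type*} [NormedAddCommGroup E] [NormedSpace ℝ E]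
    (f : SchwartzMap ℝ E) : Integrable fun x => ‖deriv f x‖ ^ 2 :=
  integrable_norm_sq_schwartzMap (SchwartzMap.derivCLM ℝ E f)

/-- The pointwise density of `‖(u, v)‖²` in `H¹(ℝ) × H¹(ℝ)`. -/
noncomputable def h1Density (u : ℝ → ℂ) (v : ℝ → ℝ) (x : ℝ) : ℝ :=
  ‖u x‖ ^ 2 + ‖deriv u x‖ ^ 2 + v x ^ 2 + deriv v x ^ 2

lemma h1Density_nonneg (u : ℝ → ℂ) (v : ℝ → ℝ) (x : ℝ) : 0 ≤ h1Density u v x := by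
  unfold h1Density
  positivity

namespace IsSKdVSolution

variable {α β γ : ℝ} {u : ℝ → ℝ → ℂ} {v : ℝ → ℝ → ℝ}

lemma integrable_norm_sq_fst (h : IsSKdVSolution α β γ u v) (t : ℝ) :
    Integrable fun x => ‖u t x‖ ^ 2 := by
  obtain ⟨f, hf⟩ := h.2.2.1 t
  simpa only [hf] using integrable_norm_sq_schwartzMap f

lemma integrable_norm_sq_deriv_fst (h : IsSKdVSolution α β γ u v) (t : ℝ) :
    Integrable fun x => ‖deriv (u t) x‖ ^ 2 := by
  obtain ⟨f, hf⟩ := h.2.2.1 t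
  simpa only [funext hf] using integrable_norm_sq_deriv_schwartzMap f

lemma integrable_sq_snd (h : IsSKdVSolution α β γ u v) (t : ℝ) :
    Integrable fun x => v t x ^ 2 := by
  obtain ⟨g, hg⟩ := h.2.2.2.1 t
  simpa only [hg, Real.norm_eq_abs, sq_abs] using integrable_norm_sq_schwartzMap g

lemma integrable_sq_deriv_snd (h : IsSKdVSolution α β γ u v) (t : ℝ) :
    Integrable fun x => deriv (v t) x ^ 2 := by
  obtain ⟨g, hg⟩ := h.2.2.2.1 t
  simpa only [funext hg, Real.norm_eq_abs, sq_abs] using integrable_norm_sq_deriv_schwartzMap g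

lemma integrable_h1Density (h : IsSKdVSolution α β γ u v) (t : ℝ) :
    Integrable (h1Density (u t) (v t)) :=
  (((h.integrable_norm_sq_fst t).add (h.integrable_norm_sq_deriv_fst t)).add
    (h.integrable_sq_snd t)).add (h.integrable_sq_deriv_snd t)

lemma integral_h1Density (h : IsSKdVSolution α β γ u v) (t : ℝ) :
    ∫ x, h1Density (u t) (v t) x = (∫ x, ‖u t x‖ ^ 2) + (∫ x, ‖deriv (u t) x‖ ^ 2) +
      (∫ x, v t x ^ 2) + ∫ x, deriv (v t) x ^ 2 := by
  have hu : Integrable fun x => ‖u t x‖ ^ 2 + ‖deriv (u t) x‖ ^ 2 :=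
    (h.integrable_norm_sq_fst t).add (h.integrable_norm_sq_deriv_fst t)
  have huv : Integrable fun x => ‖u t x‖ ^ 2 + ‖deriv (u t) x‖ ^ 2 + v t x ^ 2 :=
    hu.add (h.integrable_sq_snd t)
  rw [← integral_add (h.integrable_norm_sq_fst t) (h.integrable_norm_sq_deriv_fst t),
    ← integral_add hu (h.integrable_sq_snd t), ← integral_add huv (h.integrable_sq_deriv_snd t)]
  rfl

lemma exists_integral_h1Density_le (h : IsSKdVSolution α β γ u v) :
    ∃ C, ∀ t, ∫ x, h1Density (u t) (v t) x ≤ C := by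
  simpa only [h.integral_h1Density] using h.2.2.2.2.2.2

lemma norm_sq_fst_le (h : IsSKdVSolution α β γ u v) (t x : ℝ) :
    ‖u t x‖ ^ 2 ≤ ∫ y, h1Density (u t) (v t) y := by
  refine (norm_sq_le_integral_norm_sq_add ((contDiff_slice h.contDiff_fst t).differentiable
    (by simp)) (h.integrable_norm_sq_fst t) (h.integrable_norm_sq_deriv_fst t) x).trans ?_
  rw [h.integral_h1Density, add_assoc _ (∫ y, v t y ^ 2)]
  exact le_add_of_nonneg_right (by positivity)

lemma sq_snd_le (h : IsSKdVSolution α β γ u v) (t x : ℝ) :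
    v t x ^ 2 ≤ ∫ y, h1Density (u t) (v t) y := by
  have hle := norm_sq_le_integral_norm_sq_add ((contDiff_slice h.contDiff_snd t).differentiable
    (by simp)) (by simpa using h.integrable_sq_snd t) (by simpa using h.integrable_sq_deriv_snd t) x
  simp only [Real.norm_eq_abs, sq_abs] at hle
  rw [h.integral_h1Density, add_assoc]
  exact hle.trans (le_add_of_nonneg_left (by positivity))

lemma continuous_h1Density (h : IsSKdVSolution α β γ u v) (t : ℝ) :
    Continuous (h1Density (u t) (v t)) := by
  have hu := contDiff_slice h.contDiff_fst t
  have hv := contDiff_slice h.contDiff_snd t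
  have hu' := hu.continuous_deriv (by simp)
  have hv' := hv.continuous_deriv (by simp)
  unfold h1Density
  fun_prop

lemma integral_h1Density_interval_le (h : IsSKdVSolution α β γ u v) {t C : ℝ}
    (hC : ∫ x, h1Density (u t) (v t) x ≤ C) {a b : ℝ} (hab : a ≤ b) :
    ∫ x in a..b, h1Density (u t) (v t) x ≤ C :=
  (intervalIntegral_le_integral (h.integrable_h1Density t) (h1Density_nonneg _ _) hab).trans hC

lemma integral_abs_snd_le (h : IsSKdVSolution α β γ u v) {t C : ℝ}
    (hC : ∫ x, h1Density (u t) (v t) x ≤ C) {R : ℝ} (hR : 0 < R) :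
    ∫ x in -R..R, |v t x| ≤ (C + 1) * √R := by
  refine (integral_abs_le_mul_sqrt (contDiff_slice h.contDiff_snd t).continuous
    (h.integrable_sq_snd t) hR).trans ?_
  gcongr
  refine (integral_mono (h.integrable_sq_snd t) (h.integrable_h1Density t) fun x => ?_).trans hC
  unfold h1Density
  nlinarith [sq_nonneg ‖u t x‖, sq_nonneg ‖deriv (u t) x‖, sq_nonneg (deriv (v t) x)]

lemma integral_h1Density_add_abs_snd_le (h : IsSKdVSolution α β γ u v) {t C : ℝ}
    (hC : ∫ x, h1Density (u t) (v t) x ≤ C) {R : ℝ} (hR : 1 ≤ R) :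
    ∫ x in -R..R, (h1Density (u t) (v t) x + |v t x|) ≤ (2 * C + 1) * √R := by
  have hC0 : 0 ≤ C := (integral_nonneg (h1Density_nonneg (u t) (v t))).trans hC
  rw [intervalIntegral.integral_add ((h.continuous_h1Density t).intervalIntegrable _ _)
    ((contDiff_slice h.contDiff_snd t).continuous.abs.intervalIntegrable _ _)]
  calc _ ≤ C + (C + 1) * √R :=
        add_le_add (h.integral_h1Density_interval_le hC (by linarith))
          (h.integral_abs_snd_le hC (by linarith))
    _ ≤ (2 * C + 1) * √R := by nlinarith [Real.one_le_sqrt.2 hR]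

end IsSKdVSolution

/-! ### Coercivity of the combined flux -/

/-- The density `α v² - 2γ Im(ū ∂ₓu) + Λ v`, a combination of momentum and mass in which the
coupling terms of the system cancel. -/
noncomputable def virialDensity (α γ Λ : ℝ) (u : ℝ → ℂ) (v : ℝ → ℝ) (x : ℝ) : ℝ :=
  α * v x ^ 2 + -2 * γ * ⟪Complex.I * u x, deriv u x⟫_ℝ + Λ * v x

/-- The part `Q` of the flux `Q + ∂ₓ²N` of `virialDensity`, arranged so that for large `Λ` every
summand is nonnegative. -/
noncomputable def virialFlux (α β γ Λ : ℝ) (u : ℝ → ℂ) (v : ℝ → ℝ) (x : ℝ) : ℝ :=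
  -3 * α * deriv v x ^ 2 + -4 * γ * ‖deriv u x‖ ^ 2 + v x ^ 2 * (2 / 3 * α * v x + Λ / 2) +
    -γ * ‖u x‖ ^ 2 * (2 * α * v x + β * ‖u x‖ ^ 2 + Λ)

/-- The part `N` of the flux `Q + ∂ₓ²N` of `virialDensity`. -/
noncomputable def virialDispersion (α γ Λ : ℝ) (u : ℝ → ℂ) (v : ℝ → ℝ) (x : ℝ) : ℝ :=
  α * v x ^ 2 + γ * ‖u x‖ ^ 2 + Λ * v x

lemma IsSKdVSolution.virial_balance {α β γ : ℝ} {u : ℝ → ℝ → ℂ} {v : ℝ → ℝ → ℝ}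
    (h : IsSKdVSolution α β γ u v) (Λ : ℝ) :
    DispersiveBalance (fun t => virialDensity α γ Λ (u t) (v t))
      (fun t => virialFlux α β γ Λ (u t) (v t))
      (fun t => virialDispersion α γ Λ (u t) (v t)) 0 := by
  convert h.momentum_balance.add (h.mass_balance.const_mul Λ) using 1
  · ext t x; simp only [virialDensity]
  · ext t x; simp only [virialFlux]; ring
  · ext t x; simp only [virialDispersion]; ring
  · ext t x; simp

section VirialBounds

variable {α β γ M Λ : ℝ} {u : ℝ → ℂ} {v : ℝ → ℝ} {x : ℝ}

lemma cubic_factor_mem_Icc (hΛ : 2 * (|α| + |β|) * M ≤ Λ) (hv : |v x| ≤ M) :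
    2 / 3 * α * v x + Λ / 2 ∈ Icc 0 Λ := by
  have hM : 0 ≤ M := (abs_nonneg _).trans hv
  have hαv : |α * v x| ≤ |α| * M := by rw [abs_mul]; gcongr
  have hβM : 0 ≤ |β| * M := by positivity
  constructor <;> linarith [abs_le.1 hαv]

lemma coupling_factor_mem_Icc (hΛ : 2 * (|α| + |β|) * M ≤ Λ) (hu : ‖u x‖ ^ 2 ≤ M)
    (hv : |v x| ≤ M) : 2 * α * v x + β * ‖u x‖ ^ 2 + Λ ∈ Icc 0 (2 * Λ) := by
  have hM : 0 ≤ M := (abs_nonneg _).trans hv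
  have hαv : |α * v x| ≤ |α| * M := by rw [abs_mul]; gcongr
  have hβu : |β * ‖u x‖ ^ 2| ≤ |β| * M := by rw [abs_mul, abs_of_nonneg (sq_nonneg ‖u x‖)]; gcongr
  have hβM : 0 ≤ |β| * M := by positivity
  constructor <;> linarith [abs_le.1 hαv, abs_le.1 hβu]

lemma le_virialFlux (hγ : γ ≤ 0) (hΛ : 2 * (|α| + |β|) * M ≤ Λ)
    (hu : ‖u x‖ ^ 2 ≤ M) (hv : |v x| ≤ M) :
    min (-3 * α) (-4 * γ) * (deriv v x ^ 2 + ‖deriv u x‖ ^ 2) ≤ virialFlux α β γ Λ u v x := by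
  have hcubic := (cubic_factor_mem_Icc hΛ hv).1
  have hcoupling := (coupling_factor_mem_Icc hΛ hu hv).1
  have hlow : 0 ≤ v x ^ 2 * (2 / 3 * α * v x + Λ / 2) +
      -γ * ‖u x‖ ^ 2 * (2 * α * v x + β * ‖u x‖ ^ 2 + Λ) := by
    have := neg_nonneg.2 hγ
    positivity
  have hv' := mul_le_mul_of_nonneg_right (min_le_left (-3 * α) (-4 * γ)) (sq_nonneg (deriv v x))
  have hu' := mul_le_mul_of_nonneg_right (min_le_right (-3 * α) (-4 * γ)) (sq_nonneg ‖deriv u x‖)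
  unfold virialFlux
  linarith

/-- A common constant for the bounds of the virial density, flux and dispersion by the energy. -/
def virialBound (α γ Λ : ℝ) : ℝ := 4 * (|α| + |γ|) + 2 * Λ * (1 + |γ|)

lemma virialFlux_le (hΛ : 2 * (|α| + |β|) * M ≤ Λ) (hu : ‖u x‖ ^ 2 ≤ M) (hv : |v x| ≤ M) :
    virialFlux α β γ Λ u v x ≤ virialBound α γ Λ * h1Density u v x := by
  have hcubic := cubic_factor_mem_Icc hΛ hv
  have hcoupling := coupling_factor_mem_Icc hΛ hu hv
  have hΛ0 : 0 ≤ Λ := hcubic.1.trans hcubic.2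
  have hγΛ : 0 ≤ Λ * |γ| := by positivity
  set K := virialBound α γ Λ with hK
  rw [virialBound] at hK
  have hα := neg_le_abs α
  have hγ := neg_le_abs γ
  calc virialFlux α β γ Λ u v x
      ≤ -3 * α * deriv v x ^ 2 + -4 * γ * ‖deriv u x‖ ^ 2 + v x ^ 2 * Λ +
          |γ| * ‖u x‖ ^ 2 * (2 * Λ) := by
        unfold virialFlux
        gcongr
        exacts [hcubic.2, hcoupling.1, hcoupling.2]
    _ = -3 * α * deriv v x ^ 2 + -4 * γ * ‖deriv u x‖ ^ 2 + Λ * v x ^ 2 +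
          2 * Λ * |γ| * ‖u x‖ ^ 2 := by ring
    _ ≤ K * deriv v x ^ 2 + K * ‖deriv u x‖ ^ 2 + K * v x ^ 2 + K * ‖u x‖ ^ 2 := by
        gcongr <;> linarith [abs_nonneg α, abs_nonneg γ]
    _ = K * h1Density u v x := by rw [h1Density]; ring

lemma abs_virialDensity_le (hΛ : 0 ≤ Λ) :
    |virialDensity α γ Λ u v x| ≤ virialBound α γ Λ * (h1Density u v x + |v x|) := by
  have hinner : |⟪Complex.I * u x, deriv u x⟫_ℝ| ≤ (‖u x‖ ^ 2 + ‖deriv u x‖ ^ 2) / 2 := by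
    have := abs_real_inner_le_norm (Complex.I * u x) (deriv u x)
    rw [norm_mul, Complex.norm_I, one_mul] at this
    linarith [two_mul_le_add_sq ‖u x‖ ‖deriv u x‖]
  have hγΛ : 0 ≤ Λ * |γ| := by positivity
  set K := virialBound α γ Λ with hK
  rw [virialBound] at hK
  calc |virialDensity α γ Λ u v x|
      ≤ |α| * v x ^ 2 + 2 * |γ| * |⟪Complex.I * u x, deriv u x⟫_ℝ| + Λ * |v x| := by
        refine (abs_add_three _ _ _).trans_eq ?_
        simp only [abs_mul, abs_neg, abs_two, abs_of_nonneg hΛ, sq_abs, abs_pow]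
    _ ≤ |α| * v x ^ 2 + 2 * |γ| * ((‖u x‖ ^ 2 + ‖deriv u x‖ ^ 2) / 2) + Λ * |v x| := by gcongr
    _ = |α| * v x ^ 2 + |γ| * ‖u x‖ ^ 2 + |γ| * ‖deriv u x‖ ^ 2 + 0 * deriv v x ^ 2 +
          Λ * |v x| := by ring
    _ ≤ K * v x ^ 2 + K * ‖u x‖ ^ 2 + K * ‖deriv u x‖ ^ 2 + K * deriv v x ^ 2 + K * |v x| := by
        gcongr <;> linarith [abs_nonneg α, abs_nonneg γ]
    _ = K * (h1Density u v x + |v x|) := by rw [h1Density]; ring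

lemma abs_virialDispersion_le (hΛ : 0 ≤ Λ) :
    |virialDispersion α γ Λ u v x| ≤ virialBound α γ Λ * (h1Density u v x + |v x|) := by
  have hγΛ : 0 ≤ Λ * |γ| := by positivity
  set K := virialBound α γ Λ with hK
  rw [virialBound] at hK
  calc |virialDispersion α γ Λ u v x| ≤ |α| * v x ^ 2 + |γ| * ‖u x‖ ^ 2 + Λ * |v x| := by
        refine (abs_add_three _ _ _).trans_eq ?_
        simp only [abs_mul, abs_of_nonneg hΛ, sq_abs, abs_pow, abs_norm]
    _ = |α| * v x ^ 2 + |γ| * ‖u x‖ ^ 2 + 0 * ‖deriv u x‖ ^ 2 + 0 * deriv v x ^ 2 +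
          Λ * |v x| := by ring
    _ ≤ K * v x ^ 2 + K * ‖u x‖ ^ 2 + K * ‖deriv u x‖ ^ 2 + K * deriv v x ^ 2 + K * |v x| := by
        gcongr <;> linarith [abs_nonneg α, abs_nonneg γ]
    _ = K * (h1Density u v x + |v x|) := by rw [h1Density]; ring

end VirialBounds

/-! ### Decay along a sequence of times -/

lemma isLittleO_rpow_rpow_atTop {p q : ℝ} (hpq : p < q) :
    (fun t : ℝ => t ^ p) =o[atTop] fun t => t ^ q := by
  refine Asymptotics.isLittleO_of_tendsto' ?_ ?_
  · filter_upwards [eventually_gt_atTop 0] with t ht h0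
    exact absurd h0 (Real.rpow_pos_of_pos ht q).ne'
  · refine (tendsto_rpow_neg_atTop (sub_pos.2 hpq)).congr' ?_
    filter_upwards [eventually_gt_atTop 0] with t ht
    rw [← Real.rpow_sub ht, neg_sub]

lemma integral_integral_mono {f g : ℝ → ℝ → ℝ} (hf : Continuous (uncurry f))
    (hg : Continuous (uncurry g)) (hfg : ∀ t x, f t x ≤ g t x) {T S a b : ℝ} (hTS : T ≤ S)
    (hab : a ≤ b) : ∫ t in T..S, ∫ x in a..b, f t x ≤ ∫ t in T..S, ∫ x in a..b, g t x := by
  have hint {k : ℝ → ℝ → ℝ} (hk : Continuous (uncurry k)) :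
      IntervalIntegrable (fun t => ∫ x in a..b, k t x) volume T S :=
    (intervalIntegral.continuous_parametric_intervalIntegral_of_continuous'
      hk a b).intervalIntegrable T S
  exact intervalIntegral.integral_mono_on hTS (hint hf) (hint hg) fun t _ =>
    intervalIntegral.integral_mono_on hab (hf.uncurry_left t |>.intervalIntegrable a b)
      (hg.uncurry_left t |>.intervalIntegrable a b) fun x _ => hfg t x

namespace IsSKdVSolution

variable {α β γ : ℝ} {u : ℝ → ℝ → ℂ} {v : ℝ → ℝ → ℝ}

lemma integral_abs_le_of_abs_le (h : IsSKdVSolution α β γ u v) {t C K : ℝ}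
    (hC : ∫ x, h1Density (u t) (v t) x ≤ C) (hK : 0 ≤ K) {g : ℝ → ℝ} (hg : Continuous g)
    (hgK : ∀ x, |g x| ≤ K * (h1Density (u t) (v t) x + |v t x|)) {R : ℝ} (hR : 1 ≤ R) :
    ∫ x in -R..R, |g x| ≤ K * (2 * C + 1) * √R := by
  have hbound : Continuous fun x => K * (h1Density (u t) (v t) x + |v t x|) :=
    ((h.continuous_h1Density t).add (contDiff_slice h.contDiff_snd t).continuous.abs).const_mul K
  calc ∫ x in -R..R, |g x|
      ≤ ∫ x in -R..R, K * (h1Density (u t) (v t) x + |v t x|) :=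
        intervalIntegral.integral_mono_on (by linarith) (hg.abs.intervalIntegrable _ _)
          (hbound.intervalIntegrable _ _) fun x _ => hgK x
    _ ≤ K * (2 * C + 1) * √R := by
        rw [intervalIntegral.integral_const_mul, mul_assoc]
        exact mul_le_mul_of_nonneg_left (h.integral_h1Density_add_abs_snd_le hC hR) hK

lemma integral_le_of_le_h1Density (h : IsSKdVSolution α β γ u v) {t C K : ℝ}
    (hC : ∫ x, h1Density (u t) (v t) x ≤ C) (hK : 0 ≤ K) {g : ℝ → ℝ} (hg : Continuous g)
    (hgK : ∀ x, g x ≤ K * h1Density (u t) (v t) x) {a b : ℝ} (hab : a ≤ b) :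
    ∫ x in a..b, g x ≤ K * C := by
  calc ∫ x in a..b, g x
      ≤ ∫ x in a..b, K * h1Density (u t) (v t) x :=
        intervalIntegral.integral_mono_on hab (hg.intervalIntegrable _ _)
          (((h.continuous_h1Density t).const_mul K).intervalIntegrable _ _) fun x _ => hgK x
    _ ≤ K * C := by
        rw [intervalIntegral.integral_const_mul]
        exact mul_le_mul_of_nonneg_left (h.integral_h1Density_interval_le hC hab) hK

lemma exists_forall_norm_sq_le_abs_le (h : IsSKdVSolution α β γ u v) :
    ∃ M, ∀ t x, ‖u t x‖ ^ 2 ≤ M ∧ |v t x| ≤ M := by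
  obtain ⟨C, hC⟩ := h.exists_integral_h1Density_le
  refine ⟨C + 1, fun t x => ⟨(h.norm_sq_fst_le t x).trans ((hC t).trans (by linarith)), ?_⟩⟩
  have hsq := (h.sq_snd_le t x).trans (hC t)
  exact abs_le_of_sq_le_sq (by nlinarith [sq_nonneg (v t x)]) (by nlinarith [sq_nonneg (v t x)])

lemma continuous_uncurry_deriv_sq_add (h : IsSKdVSolution α β γ u v) :
    Continuous (uncurry fun t x => deriv (v t) x ^ 2 + ‖deriv (u t) x‖ ^ 2) :=
  ((contDiff_uncurry_deriv h.contDiff_snd (n := 0) (by simp)).continuous.pow 2).add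
    ((contDiff_uncurry_deriv h.contDiff_fst (n := 0) (by simp)).continuous.norm.pow 2)

lemma eventually_integral_virialFlux_le (hα : α ≤ 0) (hγ : γ ≤ 0) (h : IsSKdVSolution α β γ u v)
    {M Λ : ℝ} (hM : ∀ t x, ‖u t x‖ ^ 2 ≤ M ∧ |v t x| ≤ M) (hΛ : 2 * (|α| + |β|) * M ≤ Λ) {ε : ℝ}
    (hε : 0 < ε) :
    ∃ δ > 0, ∀ᶠ T in atTop, ∫ t in T..2 * T,
      ∫ x in -(δ * T ^ (2 / 3 : ℝ))..δ * T ^ (2 / 3 : ℝ),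
        virialFlux α β γ Λ (u t) (v t) x ≤ ε * T := by
  obtain ⟨C, hC⟩ := h.exists_integral_h1Density_le
  have hC0 : 0 ≤ C := (integral_nonneg (h1Density_nonneg (u 0) (v 0))).trans (hC 0)
  have hM0 : 0 ≤ M := (abs_nonneg _).trans (hM 0 0).2
  have hΛ0 : 0 ≤ Λ := le_trans (by positivity) hΛ
  have hK : 0 ≤ virialBound α γ Λ := by unfold virialBound; positivity
  have hbal := h.virial_balance Λ
  have hnonneg (t x : ℝ) : 0 ≤ virialFlux α β γ Λ (u t) (v t) x := by
    have hc : 0 ≤ min (-3 * α) (-4 * γ) := le_min (by linarith) (by linarith)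
    exact le_trans (by positivity) (le_virialFlux hγ hΛ (hM t x).1 (hM t x).2)
  refine hbal.eventually_integral_flux_le (C := virialBound α γ Λ * (2 * C + 1)) hnonneg
    (fun t R hR => ?_) (fun t R hR => ?_) (fun t R hR => ?_) hε
  · refine (h.integral_le_of_le_h1Density (hC t) hK (contDiff_slice hbal.contDiff_flux t).continuous
      (fun x => virialFlux_le hΛ (hM t x).1 (hM t x).2) (by linarith)).trans ?_
    gcongr
    linarith
  · exact h.integral_abs_le_of_abs_le (hC t) hK (contDiff_slice hbal.contDiff_density t).continuous
      (fun x => abs_virialDensity_le hΛ0) hR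
  · exact h.integral_abs_le_of_abs_le (hC t) hK
      (contDiff_slice hbal.contDiff_dispersion t).continuous
      (fun x => abs_virialDispersion_le hΛ0) hR

lemma eventually_integral_deriv_sq_add_le (hα : α < 0) (hγ : γ < 0)
    (h : IsSKdVSolution α β γ u v) {ε : ℝ} (hε : 0 < ε) :
    ∃ δ > 0, ∀ᶠ T in atTop, ∫ t in T..2 * T,
      ∫ x in -(δ * T ^ (2 / 3 : ℝ))..δ * T ^ (2 / 3 : ℝ),
        (deriv (v t) x ^ 2 + ‖deriv (u t) x‖ ^ 2) ≤ ε * T := by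
  obtain ⟨M, hM⟩ := h.exists_forall_norm_sq_le_abs_le
  set c := min (-3 * α) (-4 * γ)
  have hc : 0 < c := lt_min (by linarith) (by linarith)
  obtain ⟨δ, hδ, hflux⟩ :=
    h.eventually_integral_virialFlux_le hα.le hγ.le hM le_rfl (mul_pos hc hε)
  refine ⟨δ, hδ, ?_⟩
  filter_upwards [hflux, eventually_ge_atTop 0] with T hT hT0
  have hle := (integral_integral_mono
    (f := fun t x => c * (deriv (v t) x ^ 2 + ‖deriv (u t) x‖ ^ 2))
    (h.continuous_uncurry_deriv_sq_add.const_mul c)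
    (h.virial_balance _).contDiff_flux.continuous
    (fun t x => le_virialFlux hγ.le le_rfl (hM t x).1 (hM t x).2) (by linarith)
    (neg_le_self (by positivity))).trans hT
  simp only [intervalIntegral.integral_const_mul, mul_assoc] at hle
  exact le_of_mul_le_mul_left hle hc

end IsSKdVSolution

theorem skdv_H1_decay_beta_nonpos_general {α β γ : ℝ} (hα : α < 0) (hγ : γ < 0)
    {u : ℝ → ℝ → ℂ} {v : ℝ → ℝ → ℝ} (hsol : IsSKdVSolution α β γ u v)
    {ρ : ℝ → ℝ} (hρ : ρ =o[atTop] fun t => t ^ (2 / 3 : ℝ)) :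
    liminf (fun t : ℝ =>
        ∫ x in {x : ℝ | |x| ≤ ρ t},
          ((deriv (v t) x) ^ 2 + ‖deriv (u t) x‖ ^ 2)) atTop = 0 :=
  liminf_setIntegral_abs_le_eq_zero hsol.continuous_uncurry_deriv_sq_add
    (fun t x => by positivity) (by norm_num) hρ
    fun _ hε => hsol.eventually_integral_deriv_sq_add_le hα hγ hε

/-- Decay of the `L²` norms of `∂ₓu, ∂ₓv` on the regions `|x| ≤ K t^{p₁}`,
    `0 < p₁ < 2/3`, in the case `β ≤ 0`. -/
theorem skdv_H1_decay_beta_nonpos (α β γ : ℝ) (hα : α < 0) (hγ : γ < 0) (hβ : β ≤ 0)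
    (u : ℝ → ℝ → ℂ) (v : ℝ → ℝ → ℝ) (hsol : IsSKdVSolution α β γ u v)
    (p₁ K : ℝ) (hp₁ : 0 < p₁) (hp₁' : p₁ < 2 / 3) (hK : 0 < K) :
    liminf (fun t : ℝ =>
        ∫ x in {x : ℝ | |x| ≤ K * t ^ p₁},
          ((deriv (v t) x) ^ 2 + ‖deriv (u t) x‖ ^ 2)) atTop = 0 :=
  skdv_H1_decay_beta_nonpos_general hα hγ hsol
    ((isLittleO_rpow_rpow_atTop hp₁').const_mul_left K)
end

section
/- Let α < 0, γ < 0 and β ∈ ℝ, and let (u,v) be a regular solution of the Schrödinger–Korteweg–de Vries system with these parameters. Let p₁, q₁, p₂ satisfy q₁ > 0, p₂ > 1 and 0 < p₁ ≤ 2/(p₂+2), and define λ₁(t) = t^{p₁}/(log t)^{q₁}, λ₂(t) = λ₁(t)^{p₂}, η(t) = t^{1−p₁}·(log t)^{1+q₁}. Then for all a > 0 and b > 0, the iterated integral ∫_{10}^{∞} (1/(η(t)·λ₁(t))) · ( ∫_ℝ ( v(t,x)² + |u(t,x)|² ) · sech(x/(a·λ₁(t))) · sech(x/(b·λ₂(t)))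 dx ) dt is finite. -/
open MeasureTheory Filter

/-! Only the equation for `v` matters: it is a KdV equation forced by `∂ₓw`, `w = |u|² ≥ 0`. Test it
against a smooth weight `φ(t, x)` that grows with slope `⟨t⟩⁻¹` on `|x| ≤ ⟨t⟩ ^ p`, has height
`⟨t⟩ ^ (p - 1)`, and is cut off at the larger scale `⟨t⟩ ^ s`, `s = 1 - p / 2`. The functional
`∫ v φ` is then bounded, while its time derivative contains
`∫ (v² / 2 - γ w) ∂ₓφ ≥ ⟨t⟩⁻¹ ∫_{|x| ≤ ⟨t⟩ ^ p} (v² / 2 - γ w) - O(⟨t⟩ ^ (3p/2 - 2))`,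
whose integrand is comparable to `v² + w` because `γ < 0`. By Cauchy–Schwarz on the support of `φ`,
the terms with `∂ₜφ` and `∂ₓ³φ` are `O(⟨t⟩ ^ (3p/4 - 3/2))` if `p ≥ 1/3`, which is integrable if
`p < 2/3`.

For the weight `t⁻¹ sech (x / (a t ^ p))`, use the window `|x| ≤ ⟨t⟩ ^ r` with `p < r < 2/3`:
outside it `sech y ≤ 1 / |y|` gains the factor `⟨t⟩ ^ (p - r)`, which makes the tail integrable in
time. Powers of the logarithm are absorbed in the same loss of exponent.
-/

namespace SKdV

section Calculus

lemma abs_iteratedDeriv_mul_comp_mul_le {f g : ℝ → ℝ} {n : ℕ} (hf : ContDiff ℝ n f)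
    (hg : ContDiff ℝ n g) {A B : ℝ} (hA : ∀ k ≤ n, ∀ x, |iteratedDeriv k f x| ≤ A)
    (hB : ∀ k ≤ n, ∀ x, |iteratedDeriv k g x| ≤ B) {c d : ℝ} (hd : 0 ≤ d) (hdc : d ≤ c) (x : ℝ) :
    |iteratedDeriv n (fun x => f (c * x) * g (d * x)) x| ≤ 2 ^ n * (A * B) * c ^ n := by
  have hc : 0 ≤ c := hd.trans hdc
  have hA₀ : 0 ≤ A := (abs_nonneg _).trans (hA 0 n.zero_le 0)
  have hfc : ContDiff ℝ n fun x => f (c * x) := by fun_prop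
  have hgd : ContDiff ℝ n fun x => g (d * x) := by fun_prop
  have hterm : ∀ k ∈ Finset.range (n + 1),
      |n.choose k * iteratedDeriv k (fun x => f (c * x)) x
        * iteratedDeriv (n - k) (fun x => g (d * x)) x| ≤ n.choose k * (A * B * c ^ n) := by
    intro k hk
    have hkn : k ≤ n := Nat.lt_succ_iff.1 (Finset.mem_range.1 hk)
    rw [iteratedDeriv_comp_const_mul (hf.of_le (mod_cast hkn)) c,
      iteratedDeriv_comp_const_mul (hg.of_le (mod_cast n.sub_le k)) d]
    calc |n.choose k * (c ^ k * iteratedDeriv k f (c * x))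
          * (d ^ (n - k) * iteratedDeriv (n - k) g (d * x))|
        = n.choose k * (|iteratedDeriv k f (c * x)| * |iteratedDeriv (n - k) g (d * x)|
            * (c ^ k * d ^ (n - k))) := by
          simp only [abs_mul, abs_pow, Nat.abs_cast, abs_of_nonneg hc, abs_of_nonneg hd]; ring
      _ ≤ n.choose k * (A * B * (c ^ k * c ^ (n - k))) := by
          have hB₀ : 0 ≤ B := (abs_nonneg _).trans (hB 0 n.zero_le 0)
          gcongr
          exacts [hA k hkn _, hB _ (n.sub_le k) _]
      _ = n.choose k * (A * B * c ^ n) := by rw [pow_mul_pow_sub c hkn]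
  calc |iteratedDeriv n (fun x => f (c * x) * g (d * x)) x|
      ≤ ∑ k ∈ Finset.range (n + 1), n.choose k * (A * B * c ^ n) := by
        rw [iteratedDeriv_fun_mul hfc.contDiffAt hgd.contDiffAt]
        exact (Finset.abs_sum_le_sum_abs _ _).trans (Finset.sum_le_sum hterm)
    _ = 2 ^ n * (A * B) * c ^ n := by
        rw [← Finset.sum_mul, ← Nat.cast_sum, Nat.sum_range_choose]
        push_cast; ring

lemma exists_abs_iteratedDeriv_le {f : ℝ → ℝ} {n : ℕ} (hf : ContDiff ℝ n f)
    (hfs : HasCompactSupport f) : ∃ K, ∀ k ≤ n, ∀ x, |iteratedDeriv k f x| ≤ K := by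
  obtain ⟨K₀, hK₀⟩ := hfs.exists_bound_of_continuous hf.continuous
  induction n generalizing f K₀ with
  | zero => exact ⟨K₀, fun k hk x => by simpa [Nat.le_zero.1 hk] using hK₀ x⟩
  | succ n ih =>
    have hf' : ContDiff ℝ n (deriv f) := ContDiff.deriv' (mod_cast hf)
    obtain ⟨K₁, hK₁⟩ := hfs.deriv.exists_bound_of_continuous hf'.continuous
    obtain ⟨K, hK⟩ := ih hf' hfs.deriv K₁ hK₁
    refine ⟨max K₀ K, fun k hk x => ?_⟩
    cases k with
    | zero => exact le_max_of_le_left (by simpa using hK₀ x)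
    | succ k =>
      rw [iteratedDeriv_succ']
      exact le_max_of_le_right (hK k (by omega) x)

lemma integral_deriv_mul_of_hasCompactSupport {f g : ℝ → ℝ} (hf : ContDiff ℝ 1 f)
    (hg : ContDiff ℝ 1 g) (hgs : HasCompactSupport g) :
    ∫ x, deriv f x * g x = -∫ x, f x * deriv g x := by
  have hf' := hf.continuous_deriv le_rfl
  have hg' := hg.continuous_deriv le_rfl
  rw [eq_neg_iff_add_eq_zero, add_comm, ← eq_neg_iff_add_eq_zero]
  exact integral_mul_deriv_eq_deriv_mul_of_integrable
    (fun x _ => (hf.differentiable one_ne_zero x).hasDerivAt)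
    (fun x _ => (hg.differentiable one_ne_zero x).hasDerivAt)
    ((hf.continuous.mul hg').integrable_of_hasCompactSupport hgs.deriv.mul_left)
    ((hf'.mul hg.continuous).integrable_of_hasCompactSupport hgs.mul_left)
    ((hf.continuous.mul hg.continuous).integrable_of_hasCompactSupport hgs.mul_left)

lemma integral_iteratedDeriv_mul_of_hasCompactSupport {n : ℕ} {f g : ℝ → ℝ}
    (hf : ContDiff ℝ n f) (hg : ContDiff ℝ n g) (hgs : HasCompactSupport g) :
    ∫ x, iteratedDeriv n f x * g x = (-1) ^ n * ∫ x, f x * iteratedDeriv n g x := by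
  induction n generalizing g with
  | zero => simp
  | succ n ih =>
    have hfn : ContDiff ℝ 1 (iteratedDeriv n f) := by
      rw [iteratedDeriv_eq_iterate]
      exact ContDiff.iterate_deriv' 1 n (by rwa [add_comm])
    have hg' : ContDiff ℝ n (deriv g) := ContDiff.deriv' (mod_cast hg)
    rw [iteratedDeriv_succ, integral_deriv_mul_of_hasCompactSupport hfn
      (hg.of_le (by simp)) hgs, ih (hf.of_le (by simp)) hg' hgs.deriv, ← iteratedDeriv_succ']
    ring

lemma abs_integral_mul_le_of_forall_lt_eq_zero {f g : ℝ → ℝ} {B L : ℝ}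
    (hf : Integrable fun x => f x ^ 2) (hB : 0 ≤ B) (hL : 0 < L) (hg : ∀ x, |g x| ≤ B)
    (hg₀ : ∀ x, L < |x| → g x = 0) :
    |∫ x, f x * g x| ≤ B * √L * ((∫ x, f x ^ 2) / 2 + 1) := by
  have : 0 < √L := Real.sqrt_pos.2 hL
  have hbound : ∀ x, |f x * g x| ≤
      B * √L / 2 * f x ^ 2 + (Set.Icc (-L) L).indicator (fun _ => B / (2 * √L)) x := by
    intro x
    by_cases hx : x ∈ Set.Icc (-L) L
    · have hyoung : |f x| ≤ √L / 2 * f x ^ 2 + 1 / (2 * √L) := by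
        rw [← sub_nonneg]
        have : √L / 2 * f x ^ 2 + 1 / (2 * √L) - |f x| = (√L * |f x| - 1) ^ 2 / (2 * √L) := by
          rw [← sq_abs (f x)]
          field_simp
          ring
        rw [this]
        positivity
      calc |f x * g x| = |f x| * |g x| := abs_mul _ _
        _ ≤ (√L / 2 * f x ^ 2 + 1 / (2 * √L)) * B := by gcongr; exact hg x
        _ = _ := by rw [Set.indicator_of_mem hx]; ring
    · rw [hg₀ x (not_le.1 fun h => hx (abs_le.1 h)), Set.indicator_of_notMem hx]
      simp only [mul_zero, abs_zero, add_zero]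
      positivity
  have hind : Integrable ((Set.Icc (-L) L).indicator fun _ => B / (2 * √L)) :=
    (integrable_indicator_iff measurableSet_Icc).2 (by simp)
  calc |∫ x, f x * g x|
      ≤ ∫ x, (B * √L / 2 * f x ^ 2 + (Set.Icc (-L) L).indicator (fun _ => B / (2 * √L)) x) := by
        rw [← Real.norm_eq_abs]
        exact norm_integral_le_of_norm_le (Integrable.fun_add (hf.const_mul _) hind)
          (Eventually.of_forall hbound)
    _ = B * √L / 2 * (∫ x, f x ^ 2) + (L - -L) * (B / (2 * √L)) := by
        rw [integral_add (hf.const_mul _) hind, integral_const_mul,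
          integral_indicator measurableSet_Icc, setIntegral_const,
          Real.volume_real_Icc_of_le (by linarith), smul_eq_mul]
    _ = B * √L / 2 * (∫ x, f x ^ 2) + B * (L / √L) := by ring
    _ = B * √L * ((∫ x, f x ^ 2) / 2 + 1) := by rw [Real.div_sqrt]; ring

lemma hasCompactSupport_of_forall_lt_eq_zero {f : ℝ → ℝ} {L : ℝ} (hf : ∀ x, L < |x| → f x = 0) :
    HasCompactSupport f :=
  HasCompactSupport.intro (isCompact_Icc (a := -L) (b := L)) fun x hx =>
    hf x (not_le.1 fun h => hx (abs_le.1 h))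

lemma iteratedDeriv_eq_zero_of_forall_lt {f : ℝ → ℝ} {L : ℝ} (hf : ∀ x, L < |x| → f x = 0) (n : ℕ)
    {x : ℝ} (hx : L < |x|) : iteratedDeriv n f x = 0 := by
  have h : f =ᶠ[nhds x] fun _ => 0 :=
    (continuousAt_const.eventually_lt continuous_abs.continuousAt hx).mono hf
  exact (h.iteratedDeriv_eq n).trans iteratedDeriv_fun_const_zero

lemma deriv_fst_eq_zero_of_forall_lt {f : ℝ → ℝ → ℝ} {R : ℝ → ℝ} (hR : Continuous R)
    (hf : ∀ t x, R t < |x| → f t x = 0) {t x : ℝ} (hx : R t < |x|) :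
    deriv (fun s => f s x) t = 0 := by
  have h : (fun s => f s x) =ᶠ[nhds t] fun _ => 0 :=
    (hR.continuousAt.eventually_lt continuousAt_const hx).mono fun s hs => hf s x hs
  rw [h.deriv_eq, deriv_const]

lemma hasDerivAt_partial_fst {f : ℝ → ℝ → ℝ} (hf : ContDiff ℝ 1 (Function.uncurry f)) (t x : ℝ) :
    HasDerivAt (fun s => f s x) (fderiv ℝ (Function.uncurry f) (t, x) (1, 0)) t :=
  (hf.differentiable one_ne_zero (t, x)).hasFDerivAt.comp_hasDerivAt (f := fun s => (s, x)) t
    ((hasDerivAt_id t).prodMk (hasDerivAt_const t x))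

lemma continuous_deriv_fst {f : ℝ → ℝ → ℝ} (hf : ContDiff ℝ 1 (Function.uncurry f)) :
    Continuous fun p : ℝ × ℝ => deriv (fun s => f s p.2) p.1 := by
  simp only [fun p : ℝ × ℝ => (hasDerivAt_partial_fst hf p.1 p.2).deriv]
  exact (hf.continuous_fderiv one_ne_zero).clm_apply continuous_const

lemma hasDerivAt_integral_of_forall_lt_eq_zero {f : ℝ → ℝ → ℝ} {R : ℝ → ℝ}
    (hf : ContDiff ℝ 1 (Function.uncurry f)) (hR : Continuous R)
    (hf₀ : ∀ t x, R t < |x| → f t x = 0) (t : ℝ) :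
    HasDerivAt (fun s => ∫ x, f s x) (∫ x, deriv (fun s => f s x) t) t := by
  have hslice : ∀ s, Continuous (f s) := fun s => hf.continuous.uncurry_left s
  have hf' := continuous_deriv_fst hf
  obtain ⟨R₀, hR₀⟩ := (isCompact_closedBall t 1).exists_bound_of_continuousOn hR.continuousOn
  obtain ⟨C, hC⟩ := ((isCompact_closedBall t 1).prod (isCompact_Icc (a := -R₀) (b := R₀))
    ).exists_bound_of_continuousOn hf'.continuousOn
  have hbound : ∀ x, ∀ s ∈ Metric.closedBall t 1,
      ‖deriv (fun s => f s x) s‖ ≤ (Set.Icc (-R₀) R₀).indicator (fun _ => C) x := by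
    intro x s hs
    by_cases hx : x ∈ Set.Icc (-R₀) R₀
    · rw [Set.indicator_of_mem hx]
      exact hC (s, x) ⟨hs, hx⟩
    · rw [Set.indicator_of_notMem hx, deriv_fst_eq_zero_of_forall_lt hR hf₀, norm_zero]
      exact ((le_abs_self _).trans (hR₀ s hs)).trans_lt (not_le.1 fun h => hx (abs_le.1 h))
  have hint : Integrable (f t) := (hslice t).integrable_of_hasCompactSupport
    (hasCompactSupport_of_forall_lt_eq_zero (hf₀ t))
  exact (hasDerivAt_integral_of_dominated_loc_of_deriv_le (Metric.closedBall_mem_nhds t one_pos)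
    (Eventually.of_forall fun s => (hslice s).aestronglyMeasurable) hint
    (hf'.comp (by fun_prop : Continuous fun x : ℝ => (t, x))).aestronglyMeasurable
    (Eventually.of_forall hbound)
    ((integrable_indicator_iff measurableSet_Icc).2 (by simp))
    (Eventually.of_forall fun x s _ =>
      (hasDerivAt_partial_fst hf s x).differentiableAt.hasDerivAt)).2

lemma integrableOn_Ici_of_hasDerivAt_of_bddAbove {g g' : ℝ → ℝ} {a : ℝ}
    (hg : ∀ t, HasDerivAt g (g' t) t) (hg' : ∀ t, 0 ≤ g' t) (hbdd : BddAbove (Set.range g)) :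
    IntegrableOn g' (Set.Ici a) :=
  (integrableOn_Ici_iff_integrableOn_Ioi (by simp)).2 <|
    integrableOn_Ioi_deriv_of_nonneg' (fun t _ => hg t) (fun t _ => hg' t)
      (tendsto_atTop_ciSup (monotone_of_hasDerivAt_nonneg hg hg') hbdd)

lemma lintegral_ofReal_lt_top_of_le_deriv_add {g g' m r : ℝ → ℝ} {B a : ℝ}
    (hg : ∀ t, HasDerivAt g (g' t) t) (hB : ∀ t, |g t| ≤ B) (hr : Continuous r)
    (hri : Integrable r) (hm₀ : ∀ t, 0 ≤ m t) (hm : ∀ t, m t ≤ g' t + r t) :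
    ∫⁻ t in Set.Ici a, ENNReal.ofReal (m t) < ⊤ := by
  have hderiv : ∀ t, HasDerivAt (fun t => g t + ∫ s in (0 : ℝ)..t, r s) (g' t + r t) t :=
    fun t => (hg t).add (hr.integral_hasStrictDerivAt 0 t).hasDerivAt
  have hbdd : BddAbove (Set.range fun t => g t + ∫ s in (0 : ℝ)..t, r s) := by
    refine ⟨B + ∫ s, ‖r s‖, ?_⟩
    rintro _ ⟨t, rfl⟩
    refine add_le_add ((le_abs_self _).trans (hB t)) ?_
    calc ∫ s in (0 : ℝ)..t, r s ≤ ‖∫ s in (0 : ℝ)..t, r s‖ := le_abs_self _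
      _ ≤ ∫ s in Set.uIoc 0 t, ‖r s‖ := intervalIntegral.norm_integral_le_integral_norm_uIoc
      _ ≤ ∫ s, ‖r s‖ :=
        setIntegral_le_integral hri.norm (Eventually.of_forall fun _ => norm_nonneg _)
  refine (lintegral_mono fun t => ENNReal.ofReal_le_ofReal (hm t)).trans_lt ?_
  exact (integrableOn_Ici_of_hasDerivAt_of_bddAbove hderiv (fun t => (hm₀ t).trans (hm t))
    hbdd).lintegral_lt_top

lemma one_div_cosh_le_indicator_add {c L : ℝ} (hc : 0 < c) (hL : 0 < L) (x : ℝ) :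
    1 / Real.cosh (x / c) ≤ (Set.Icc (-L) L).indicator 1 x + c / L := by
  have hcosh := Real.one_le_cosh (x / c)
  by_cases hx : x ∈ Set.Icc (-L) L
  · rw [Set.indicator_of_mem hx, Pi.one_apply]
    exact (div_le_one_of_le₀ hcosh (by positivity)).trans (le_add_of_nonneg_right (by positivity))
  · have hLx : L ≤ |x| := (not_le.1 fun h => hx (abs_le.1 h)).le
    have hself : |x| / c ≤ Real.cosh (x / c) := by
      rw [← Real.cosh_abs, abs_div, abs_of_pos hc]
      exact (Real.self_le_sinh_iff.2 (by positivity)).trans (Real.sinh_lt_cosh _).le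
    rw [Set.indicator_of_notMem hx, zero_add, ← one_div_div L c]
    gcongr
    exact le_trans (by gcongr) hself

end Calculus

section Bracket

/-- The Japanese bracket `⟨t⟩ = √(1 + t²)`, a smooth substitute for `max 1 |t|`; powers of it serve
as the time-dependent scales. -/
noncomputable def bracket (t : ℝ) : ℝ := √(1 + t ^ 2)

lemma one_le_bracket (t : ℝ) : 1 ≤ bracket t :=
  Real.one_le_sqrt.2 (by linarith [sq_nonneg t])

lemma bracket_pos (t : ℝ) : 0 < bracket t := zero_lt_one.trans_le (one_le_bracket t)

lemma le_bracket (t : ℝ) : t ≤ bracket t := Real.le_sqrt_of_sq_le (by linarith)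

lemma bracket_le_two_mul {t : ℝ} (ht : 1 ≤ t) : bracket t ≤ 2 * t :=
  Real.sqrt_le_iff.2 ⟨by linarith, by nlinarith⟩

lemma contDiff_bracket {n : WithTop ℕ∞} : ContDiff ℝ n bracket :=
  ContDiff.sqrt (by fun_prop) fun t => by positivity

lemma continuous_bracket_rpow (r : ℝ) : Continuous fun t => bracket t ^ r :=
  (contDiff_bracket (n := 0)).continuous.rpow_const fun t => Or.inl (bracket_pos t).ne'

lemma abs_deriv_bracket_le (t : ℝ) : |deriv bracket t| ≤ 1 := by
  have h : HasDerivAt (fun t => √(1 + t ^ 2)) (2 * t / (2 * √(1 + t ^ 2))) t := by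
    simpa using ((hasDerivAt_pow 2 t).const_add 1).sqrt (by positivity)
  rw [show deriv bracket t = _ from h.deriv, mul_div_mul_left _ _ two_ne_zero, abs_div,
    abs_of_nonneg (Real.sqrt_nonneg _), div_le_one (by positivity)]
  exact Real.abs_le_sqrt (by linarith)

lemma integrable_bracket_rpow {r : ℝ} (hr : r < -1) : Integrable fun t => bracket t ^ r := by
  have h := integrable_rpow_neg_one_add_norm_sq (E := ℝ) (μ := volume) (r := -r)
    (by simpa using lt_neg_of_lt_neg hr)
  refine h.congr (Eventually.of_forall fun t => ?_)
  simp only [bracket, Real.sqrt_eq_rpow, Real.norm_eq_abs, sq_abs, neg_neg]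
  rw [← Real.rpow_mul (by positivity)]
  ring_nf

end Bracket

section TestFunction

/-- A smooth cutoff, equal to `1` on `[-1, 1]` and supported in `[-2, 2]`. -/
noncomputable def cutoff : ℝ → ℝ := (⟨1, 2, one_pos, one_lt_two⟩ : ContDiffBump (0 : ℝ))

/-- The primitive of `cutoff`: the spatial profile of the virial weight. -/
noncomputable def ramp (x : ℝ) : ℝ := ∫ y in (0 : ℝ)..x, cutoff y

lemma contDiff_cutoff {n : ℕ∞} : ContDiff ℝ n cutoff := ContDiffBump.contDiff _

lemma cutoff_nonneg (x : ℝ) : 0 ≤ cutoff x := ContDiffBump.nonneg _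

lemma cutoff_eq_one {x : ℝ} (hx : |x| ≤ 1) : cutoff x = 1 :=
  ContDiffBump.one_of_mem_closedBall _ (mem_closedBall_zero_iff.2 hx)

lemma cutoff_eq_zero {x : ℝ} (hx : 2 ≤ |x|) : cutoff x = 0 :=
  ContDiffBump.zero_of_le_dist _ (by simpa using hx)

lemma hasCompactSupport_cutoff : HasCompactSupport cutoff := ContDiffBump.hasCompactSupport _

lemma hasDerivAt_ramp (x : ℝ) : HasDerivAt ramp (cutoff x) x :=
  ((contDiff_cutoff (n := 0)).continuous.integral_hasStrictDerivAt 0 x).hasDerivAt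

lemma deriv_ramp : deriv ramp = cutoff := funext fun x => (hasDerivAt_ramp x).deriv

lemma contDiff_ramp {n : ℕ} : ContDiff ℝ n ramp := by
  refine ContDiff.of_le (n := (n : WithTop ℕ∞) + 1) ?_ le_self_add
  refine contDiff_succ_iff_deriv.2 ⟨fun x => (hasDerivAt_ramp x).differentiableAt, by simp, ?_⟩
  rw [deriv_ramp]
  exact contDiff_cutoff

lemma exists_abs_iteratedDeriv_cutoff_le (n : ℕ) :
    ∃ K, ∀ k ≤ n, ∀ x, |iteratedDeriv k cutoff x| ≤ K :=
  exists_abs_iteratedDeriv_le contDiff_cutoff hasCompactSupport_cutoff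

lemma abs_ramp_le (x : ℝ) : |ramp x| ≤ ∫ y, ‖cutoff y‖ :=
  intervalIntegral.norm_integral_le_integral_norm_uIoc.trans <|
    setIntegral_le_integral ((contDiff_cutoff (n := 0)).continuous.integrable_of_hasCompactSupport
      hasCompactSupport_cutoff).norm
      (Eventually.of_forall fun _ => norm_nonneg _)

lemma exists_abs_iteratedDeriv_ramp_le (n : ℕ) :
    ∃ K, ∀ k ≤ n, ∀ x, |iteratedDeriv k ramp x| ≤ K := by
  obtain ⟨K, hK⟩ := exists_abs_iteratedDeriv_cutoff_le n
  refine ⟨max (∫ y, ‖cutoff y‖) K, fun k hk x => ?_⟩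
  cases k with
  | zero => exact le_max_of_le_left (by simpa using abs_ramp_le x)
  | succ k =>
    rw [iteratedDeriv_succ', deriv_ramp]
    exact le_max_of_le_right (hK k (by omega) x)

/-- The virial weight at scale `b`. It increases with slope `b⁻¹` on `|x| ≤ b ^ p` and is supported
in `|x| ≤ 2 b ^ s`. -/
noncomputable def testFun (p s b x : ℝ) : ℝ :=
  b ^ (p - 1) * (ramp (b ^ (-p) * x) * cutoff (b ^ (-s) * x))

variable {p s b : ℝ}

lemma contDiff_testFun {n : ℕ} : ContDiff ℝ n (testFun p s b) :=
  contDiff_const.mul ((contDiff_ramp.comp (by fun_prop)).mul (contDiff_cutoff.comp (by fun_prop)))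

lemma contDiff_testFun_bracket {n : ℕ} :
    ContDiff ℝ n fun q : ℝ × ℝ => testFun p s (bracket q.1) q.2 := by
  have hpow : ∀ r : ℝ, ContDiff ℝ n fun q : ℝ × ℝ => bracket q.1 ^ r := fun r =>
    (contDiff_bracket.comp contDiff_fst).rpow_const_of_ne fun q => (bracket_pos q.1).ne'
  exact (hpow _).mul ((contDiff_ramp.comp ((hpow _).mul contDiff_snd)).mul
    (contDiff_cutoff.comp ((hpow _).mul contDiff_snd)))

lemma testFun_eq_zero (hb : 0 < b) {x : ℝ} (hx : 2 * b ^ s ≤ |x|) : testFun p s b x = 0 := by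
  rw [testFun, cutoff_eq_zero, mul_zero, mul_zero]
  rwa [abs_mul, abs_of_pos (by positivity), Real.rpow_neg hb.le, ← div_eq_inv_mul,
    le_div_iff₀ (by positivity)]

lemma hasCompactSupport_testFun (hb : 0 < b) : HasCompactSupport (testFun p s b) :=
  hasCompactSupport_of_forall_lt_eq_zero fun _ hx => testFun_eq_zero hb hx.le

lemma exists_abs_iteratedDeriv_testFun_le (hps : p ≤ s) (n : ℕ) :
    ∃ K, ∀ b, 1 ≤ b → ∀ x, |iteratedDeriv n (testFun p s b) x| ≤ K * b ^ (p - 1 - p * n) := by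
  obtain ⟨A, hA⟩ := exists_abs_iteratedDeriv_ramp_le n
  obtain ⟨B, hB⟩ := exists_abs_iteratedDeriv_cutoff_le n
  refine ⟨2 ^ n * (A * B), fun b hb x => ?_⟩
  have hb₀ : 0 < b := zero_lt_one.trans_le hb
  calc |iteratedDeriv n (testFun p s b) x|
      = b ^ (p - 1) *
          |iteratedDeriv n (fun x => ramp (b ^ (-p) * x) * cutoff (b ^ (-s) * x)) x| := by
        rw [show testFun p s b = fun x =>
            b ^ (p - 1) * (ramp (b ^ (-p) * x) * cutoff (b ^ (-s) * x)) from rfl,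
          iteratedDeriv_const_mul_field, abs_mul, abs_of_pos (by positivity)]
    _ ≤ b ^ (p - 1) * (2 ^ n * (A * B) * (b ^ (-p)) ^ n) := by
        gcongr
        exact abs_iteratedDeriv_mul_comp_mul_le contDiff_ramp contDiff_cutoff hA hB
          (by positivity) (Real.rpow_le_rpow_of_exponent_le hb (by linarith)) x
    _ = 2 ^ n * (A * B) * b ^ (p - 1 - p * n) := by
        rw [sub_eq_add_neg (p - 1), Real.rpow_add hb₀, ← neg_mul, Real.rpow_mul_natCast hb₀.le]
        ring

lemma hasDerivAt_testFun (hb : 0 < b) (x : ℝ) :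
    HasDerivAt (testFun p s b) (b⁻¹ * (cutoff (b ^ (-p) * x) * cutoff (b ^ (-s) * x)) +
      b ^ (p - 1 - s) * (ramp (b ^ (-p) * x) * deriv cutoff (b ^ (-s) * x))) x := by
  have hcut : HasDerivAt cutoff (deriv cutoff (b ^ (-s) * x)) (b ^ (-s) * x) :=
    (contDiff_cutoff (n := 1)).differentiable (by simp) _ |>.hasDerivAt
  have hlin : ∀ c : ℝ, HasDerivAt (fun x => c * x) c x := fun c => by
    simpa using (hasDerivAt_id x).const_mul c
  refine ((((hasDerivAt_ramp _).comp x (hlin _)).mul (hcut.comp x (hlin _))).const_mul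
    (b ^ (p - 1))).congr_deriv ?_
  have h₁ : b ^ (p - 1) * b ^ (-p) = b⁻¹ := by
    rw [← Real.rpow_add hb, ← Real.rpow_neg_one]; ring_nf
  have h₂ : b ^ (p - 1) * b ^ (-s) = b ^ (p - 1 - s) := by
    rw [← Real.rpow_add hb]; ring_nf
  rw [← h₁, ← h₂]
  simp only [Function.comp_apply]
  ring

lemma exists_le_deriv_testFun (hps : p ≤ s) :
    ∃ K, ∀ b, 1 ≤ b → ∀ x, (Set.Icc (-b ^ p) (b ^ p)).indicator (fun _ => b⁻¹) x
      - K * b ^ (p - 1 - s) ≤ deriv (testFun p s b) x := by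
  obtain ⟨A, hA⟩ := exists_abs_iteratedDeriv_ramp_le 0
  obtain ⟨B, hB⟩ := exists_abs_iteratedDeriv_cutoff_le 1
  refine ⟨A * B, fun b hb x => ?_⟩
  have hb₀ : 0 < b := zero_lt_one.trans_le hb
  rw [(hasDerivAt_testFun hb₀ x).deriv, sub_eq_add_neg]
  refine add_le_add (Set.indicator_apply_le' (fun hx => ?_) fun _ => ?_) ?_
  · have hone : ∀ r, p ≤ r → |b ^ (-r) * x| ≤ 1 := fun r hr => by
      rw [abs_mul, abs_of_pos (by positivity), Real.rpow_neg hb₀.le,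
        inv_mul_le_one₀ (by positivity)]
      exact (abs_le.2 hx).trans (Real.rpow_le_rpow_of_exponent_le hb hr)
    rw [cutoff_eq_one (hone p le_rfl), cutoff_eq_one (hone s hps), mul_one, mul_one]
  · exact mul_nonneg (by positivity) (mul_nonneg (cutoff_nonneg _) (cutoff_nonneg _))
  · have hprod : |ramp (b ^ (-p) * x) * deriv cutoff (b ^ (-s) * x)| ≤ A * B := by
      rw [abs_mul]
      have h₀ := hA 0 le_rfl (b ^ (-p) * x)
      have h₁ := hB 1 le_rfl (b ^ (-s) * x)
      rw [iteratedDeriv_zero] at h₀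
      rw [iteratedDeriv_one] at h₁
      gcongr
      exact (abs_nonneg _).trans h₀
    rw [mul_comm (A * B), ← mul_neg]
    gcongr
    exact (abs_le.1 hprod).1

lemma hasDerivAt_testFun_scale (hb : 0 < b) (x : ℝ) :
    HasDerivAt (fun b => testFun p s b x)
      (b ^ (p - 2) * ((p - 1) * (ramp (b ^ (-p) * x) * cutoff (b ^ (-s) * x))
        - p * (b ^ (-p) * x * cutoff (b ^ (-p) * x) * cutoff (b ^ (-s) * x))
        - s * (ramp (b ^ (-p) * x) * (b ^ (-s) * x * deriv cutoff (b ^ (-s) * x))))) b := by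
  have hcut : HasDerivAt cutoff (deriv cutoff (b ^ (-s) * x)) (b ^ (-s) * x) :=
    (contDiff_cutoff (n := 1)).differentiable (by simp) _ |>.hasDerivAt
  have hpow : ∀ r : ℝ, HasDerivAt (fun b : ℝ => b ^ r) (r * (b⁻¹ * b ^ r)) b := fun r =>
    (Real.hasDerivAt_rpow_const (Or.inl hb.ne')).congr_deriv
      (by rw [Real.rpow_sub_one hb.ne', div_eq_inv_mul])
  have hmul := (hpow (p - 1)).mul (((hasDerivAt_ramp _).comp b ((hpow (-p)).mul_const x)).mul
    (hcut.comp b ((hpow (-s)).mul_const x)))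
  refine hmul.congr_deriv ?_
  have h : b ^ (p - 2) = b⁻¹ * b ^ (p - 1) := by
    rw [← div_eq_inv_mul, ← Real.rpow_sub_one hb.ne']; ring_nf
  rw [h]
  simp only [Pi.mul_apply, Function.comp_apply]
  ring

lemma exists_abs_deriv_testFun_scale_le (p s : ℝ) :
    ∃ K, ∀ b, 0 < b → ∀ x, |deriv (fun b => testFun p s b x) b| ≤ K * b ^ (p - 2) := by
  obtain ⟨A, hA⟩ := exists_abs_iteratedDeriv_ramp_le 0
  obtain ⟨B, hB⟩ := exists_abs_iteratedDeriv_cutoff_le 0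
  have hcont := (contDiff_cutoff (n := 1)).continuous
  obtain ⟨C, hC⟩ := (hasCompactSupport_cutoff.mul_left (f := id)).exists_bound_of_continuous
    (continuous_id.mul hcont)
  obtain ⟨D, hD⟩ := (hasCompactSupport_cutoff.deriv.mul_left (f := id)).exists_bound_of_continuous
    (continuous_id.mul (contDiff_cutoff.continuous_deriv le_rfl))
  simp only [Nat.le_zero, forall_eq, iteratedDeriv_zero] at hA hB
  simp only [Pi.mul_apply, id, Real.norm_eq_abs] at hC hD
  refine ⟨|p - 1| * (A * B) + |p| * (C * B) + |s| * (A * D), fun b hb x => ?_⟩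
  have hA₀ : 0 ≤ A := (abs_nonneg _).trans (hA 0)
  have hC₀ : 0 ≤ C := (abs_nonneg _).trans (hC 0)
  rw [(hasDerivAt_testFun_scale hb x).deriv, abs_mul, abs_of_pos (by positivity), mul_comm]
  gcongr
  refine (abs_sub _ _).trans (add_le_add ((abs_sub _ _).trans (add_le_add ?_ ?_)) ?_)
  · rw [abs_mul, abs_mul (ramp _)]
    gcongr
    exacts [hA _, hB _]
  · rw [abs_mul, abs_mul (_ * _)]
    gcongr
    exacts [hC _, hB _]
  · rw [abs_mul, abs_mul (ramp _)]
    gcongr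
    exacts [hA _, hD _]

end TestFunction

section ForcedKdV

/-- A bounded-mass solution of the forced KdV equation `∂ₜv + ∂ₓ³v + v ∂ₓv = γ ∂ₓw` with nonnegative
forcing density `w`. The Schrödinger–KdV system is the case `w = |u|²`. -/
structure IsForcedKdVSolution (γ : ℝ) (v w : ℝ → ℝ → ℝ) : Prop where
  contDiff_uncurry : ContDiff ℝ 1 (Function.uncurry v)
  contDiff_space (t : ℝ) : ContDiff ℝ 3 (v t)
  contDiff_forcing (t : ℝ) : ContDiff ℝ 1 (w t)
  forcing_nonneg (t x : ℝ) : 0 ≤ w t x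
  equation (t x : ℝ) : deriv (fun s => v s x) t + iteratedDeriv 3 (v t) x + v t x * deriv (v t) x =
    γ * deriv (w t) x
  integrable_sq (t : ℝ) : Integrable fun x => v t x ^ 2
  integrable_forcing (t : ℝ) : Integrable (w t)
  exists_mass_le : ∃ M, ∀ t, (∫ x, v t x ^ 2) + ∫ x, w t x ≤ M

/-- The part `v² / 2 - γ w` of the momentum flux: the forced KdV equation reads
`∂ₜv + ∂ₓ(∂ₓ²v + flux) = 0`. -/
noncomputable def flux (γ : ℝ) (v w : ℝ → ℝ → ℝ) (t x : ℝ) : ℝ := v t x ^ 2 / 2 - γ * w t x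

/-- The virial functional: the momentum of `v` tested against `testFun` at scale `⟨t⟩`. -/
noncomputable def virial (v : ℝ → ℝ → ℝ) (p s t : ℝ) : ℝ :=
  ∫ x, v t x * testFun p s (bracket t) x

namespace IsForcedKdVSolution

variable {γ : ℝ} {v w : ℝ → ℝ → ℝ}

lemma contDiff_flux (h : IsForcedKdVSolution γ v w) (t : ℝ) : ContDiff ℝ 1 (flux γ v w t) :=
  ((((h.contDiff_space t).of_le (by norm_num)).pow 2).div_const 2).sub
    (contDiff_const.mul (h.contDiff_forcing t))

lemma integrable_flux (h : IsForcedKdVSolution γ v w) (t : ℝ) : Integrable (flux γ v w t) :=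
  ((h.integrable_sq t).div_const 2).sub ((h.integrable_forcing t).const_mul γ)

lemma integrable_mass (h : IsForcedKdVSolution γ v w) (t : ℝ) :
    Integrable fun x => v t x ^ 2 + w t x :=
  (h.integrable_sq t).add (h.integrable_forcing t)

lemma mass_nonneg (h : IsForcedKdVSolution γ v w) (t x : ℝ) : 0 ≤ v t x ^ 2 + w t x :=
  add_nonneg (sq_nonneg _) (h.forcing_nonneg t x)

lemma exists_integral_mass_le (h : IsForcedKdVSolution γ v w) :
    ∃ M, ∀ t, ∫ x, (v t x ^ 2 + w t x) ≤ M := by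
  obtain ⟨M, hM⟩ := h.exists_mass_le
  exact ⟨M, fun t => (integral_add (h.integrable_sq t) (h.integrable_forcing t)).trans_le (hM t)⟩

lemma flux_nonneg (h : IsForcedKdVSolution γ v w) (hγ : γ ≤ 0) (t x : ℝ) : 0 ≤ flux γ v w t x := by
  have := mul_nonneg (neg_nonneg.2 hγ) (h.forcing_nonneg t x)
  rw [flux]
  linarith [sq_nonneg (v t x)]

lemma flux_le_mass (h : IsForcedKdVSolution γ v w) (hγ : γ ≤ 0) (t x : ℝ) :
    flux γ v w t x ≤ (1 - γ) * (v t x ^ 2 + w t x) := by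
  have := h.forcing_nonneg t x
  have := mul_nonneg (neg_nonneg.2 hγ) (sq_nonneg (v t x))
  rw [flux]
  linarith [sq_nonneg (v t x)]

lemma mass_le_flux (h : IsForcedKdVSolution γ v w) (hγ : γ < 0) (t x : ℝ) :
    v t x ^ 2 + w t x ≤ (2 + (-γ)⁻¹) * flux γ v w t x := by
  have hγ' : 0 < -γ := neg_pos.2 hγ
  have hw : 0 ≤ -γ * w t x := mul_nonneg hγ'.le (h.forcing_nonneg t x)
  have hv : 0 ≤ (-γ)⁻¹ * v t x ^ 2 := by positivity
  have hcancel : (-γ)⁻¹ * (-γ * w t x) = w t x := inv_mul_cancel_left₀ hγ'.ne' _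
  rw [flux]
  linarith

lemma deriv_time_eq (h : IsForcedKdVSolution γ v w) (t x : ℝ) :
    deriv (fun s => v s x) t = -iteratedDeriv 3 (v t) x - deriv (flux γ v w t) x := by
  have hv := ((h.contDiff_space t).differentiable (by norm_num) x).hasDerivAt
  have hw := ((h.contDiff_forcing t).differentiable one_ne_zero x).hasDerivAt
  have hflux : deriv (flux γ v w t) x = v t x * deriv (v t) x - γ * deriv (w t) x := by
    refine (((hv.fun_pow 2).div_const 2).sub (hw.const_mul γ)).deriv.trans ?_
    norm_num
    ring
  linarith [h.equation t x]

lemma integral_deriv_time_mul (h : IsForcedKdVSolution γ v w) (t : ℝ) {φ : ℝ → ℝ}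
    (hφ : ContDiff ℝ 3 φ) (hφs : HasCompactSupport φ) :
    ∫ x, deriv (fun s => v s x) t * φ x =
      (∫ x, v t x * iteratedDeriv 3 φ x) + ∫ x, flux γ v w t x * deriv φ x := by
  have hflux := h.contDiff_flux t
  have h₃ : Integrable fun x => iteratedDeriv 3 (v t) x * φ x :=
    (((h.contDiff_space t).continuous_iteratedDeriv 3 le_rfl).mul
      hφ.continuous).integrable_of_hasCompactSupport hφs.mul_left
  have h₁ : Integrable fun x => deriv (flux γ v w t) x * φ x :=
    ((hflux.continuous_deriv le_rfl).mul hφ.continuous).integrable_of_hasCompactSupport hφs.mul_left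
  calc ∫ x, deriv (fun s => v s x) t * φ x
      = ∫ x, (-(iteratedDeriv 3 (v t) x * φ x) - deriv (flux γ v w t) x * φ x) := by
        congr with x
        rw [h.deriv_time_eq]
        ring
    _ = -(∫ x, iteratedDeriv 3 (v t) x * φ x) - ∫ x, deriv (flux γ v w t) x * φ x := by
        rw [integral_sub h₃.fun_neg h₁, integral_neg]
    _ = _ := by
        rw [integral_iteratedDeriv_mul_of_hasCompactSupport (h.contDiff_space t) hφ hφs,
          integral_deriv_mul_of_hasCompactSupport hflux (hφ.of_le (by norm_num)) hφs]
        ring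

lemma hasDerivAt_integral_mul (h : IsForcedKdVSolution γ v w) {φ : ℝ → ℝ → ℝ} {R : ℝ → ℝ}
    (hφ : ContDiff ℝ 3 (Function.uncurry φ)) (hR : Continuous R)
    (hφ₀ : ∀ t x, R t < |x| → φ t x = 0) (t : ℝ) :
    HasDerivAt (fun t => ∫ x, v t x * φ t x)
      ((∫ x, v t x * deriv (fun s => φ s x) t) + (∫ x, v t x * iteratedDeriv 3 (φ t) x) +
        ∫ x, flux γ v w t x * deriv (φ t) x) t := by
  have hφ₁ : ContDiff ℝ 1 (Function.uncurry φ) := hφ.of_le (by norm_num)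
  have hφt : ContDiff ℝ 3 (φ t) := hφ.comp (by fun_prop : ContDiff ℝ 3 fun x : ℝ => (t, x))
  have hslice : ∀ {g : ℝ × ℝ → ℝ}, Continuous g → Continuous fun x => g (t, x) := fun hg =>
    hg.comp (by fun_prop)
  have hsupp := hasCompactSupport_of_forall_lt_eq_zero (hφ₀ t)
  have hint₁ : Integrable fun x => deriv (fun s => v s x) t * φ t x :=
    ((hslice (continuous_deriv_fst h.contDiff_uncurry)).mul
      hφt.continuous).integrable_of_hasCompactSupport hsupp.mul_left
  have hint₂ : Integrable fun x => v t x * deriv (fun s => φ s x) t :=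
    ((h.contDiff_space t).continuous.mul
      (hslice (continuous_deriv_fst hφ₁))).integrable_of_hasCompactSupport
        (hasCompactSupport_of_forall_lt_eq_zero fun x hx =>
          deriv_fst_eq_zero_of_forall_lt hR hφ₀ hx).mul_left
  refine (hasDerivAt_integral_of_forall_lt_eq_zero (f := fun t x => v t x * φ t x)
    (h.contDiff_uncurry.mul hφ₁) hR (fun t x hx => by simp [hφ₀ t x hx]) t).congr_deriv ?_
  rw [add_assoc, add_comm, ← h.integral_deriv_time_mul t hφt hsupp, ← integral_add hint₁ hint₂]
  congr with x
  exact ((hasDerivAt_partial_fst h.contDiff_uncurry t x).differentiableAt.hasDerivAt.mul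
    (hasDerivAt_partial_fst hφ₁ t x).differentiableAt.hasDerivAt).deriv

lemma exists_abs_integral_mul_le (h : IsForcedKdVSolution γ v w) :
    ∃ M, ∀ t b K r s : ℝ, 0 < b → ∀ g : ℝ → ℝ, (∀ x, |g x| ≤ K * b ^ r) →
      (∀ x, 2 * b ^ s < |x| → g x = 0) → |∫ x, v t x * g x| ≤ M * K * b ^ (r + s / 2) := by
  obtain ⟨M, hM⟩ := h.exists_mass_le
  refine ⟨√2 * (M / 2 + 1), fun t b K r s hb g hg hg₀ => ?_⟩
  have hKb : 0 ≤ K * b ^ r := (abs_nonneg _).trans (hg 0)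
  have hsq : ∫ x, v t x ^ 2 ≤ M :=
    (le_add_of_nonneg_right (integral_nonneg (h.forcing_nonneg t))).trans (hM t)
  have hsqrt : √(2 * b ^ s) = √2 * b ^ (s / 2) := by
    rw [Real.sqrt_mul zero_le_two, Real.sqrt_eq_rpow (b ^ s), ← Real.rpow_mul hb.le]
    ring_nf
  calc |∫ x, v t x * g x|
      ≤ K * b ^ r * √(2 * b ^ s) * ((∫ x, v t x ^ 2) / 2 + 1) :=
        abs_integral_mul_le_of_forall_lt_eq_zero (h.integrable_sq t) hKb (by positivity) hg hg₀
    _ ≤ K * b ^ r * √(2 * b ^ s) * (M / 2 + 1) := by gcongr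
    _ = √2 * (M / 2 + 1) * K * b ^ (r + s / 2) := by
        rw [hsqrt, Real.rpow_add hb]
        ring

lemma hasDerivAt_virial (h : IsForcedKdVSolution γ v w) (p s t : ℝ) :
    HasDerivAt (virial v p s)
      ((∫ x, v t x * deriv (fun t => testFun p s (bracket t) x) t) +
        (∫ x, v t x * iteratedDeriv 3 (testFun p s (bracket t)) x) +
        ∫ x, flux γ v w t x * deriv (testFun p s (bracket t)) x) t :=
  h.hasDerivAt_integral_mul (φ := fun t x => testFun p s (bracket t) x)
    (R := fun t => 2 * bracket t ^ s) contDiff_testFun_bracket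
    (continuous_const.mul (continuous_bracket_rpow s))
    (fun t _ hx => testFun_eq_zero (bracket_pos t) hx.le) t

lemma exists_abs_integral_mul_deriv_time_testFun_le (h : IsForcedKdVSolution γ v w) (p s : ℝ) :
    ∃ K, ∀ t, |∫ x, v t x * deriv (fun t => testFun p s (bracket t) x) t| ≤
      K * bracket t ^ (p - 2 + s / 2) := by
  obtain ⟨M, hM⟩ := h.exists_abs_integral_mul_le
  obtain ⟨K, hK⟩ := exists_abs_deriv_testFun_scale_le p s
  refine ⟨M * K, fun t => hM t _ K _ s (bracket_pos t) _ (fun x => ?_) fun x hx => ?_⟩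
  · have hchain : deriv (fun t => testFun p s (bracket t) x) t =
        deriv (fun b => testFun p s b x) (bracket t) * deriv bracket t :=
      deriv_comp t (hasDerivAt_testFun_scale (bracket_pos t) x).differentiableAt
        ((contDiff_bracket (n := 1)).differentiable one_ne_zero t)
    rw [hchain, abs_mul]
    exact (mul_le_of_le_one_right (abs_nonneg _) (abs_deriv_bracket_le t)).trans
      (hK _ (bracket_pos t) x)
  · exact deriv_fst_eq_zero_of_forall_lt (f := fun t x => testFun p s (bracket t) x)
      (R := fun t => 2 * bracket t ^ s)
      (continuous_const.mul (continuous_bracket_rpow s))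
      (fun t _ hx => testFun_eq_zero (bracket_pos t) hx.le) hx

lemma exists_abs_integral_mul_iteratedDeriv_testFun_le (h : IsForcedKdVSolution γ v w) {p s : ℝ}
    (hps : p ≤ s) (n : ℕ) : ∃ K, ∀ t, |∫ x, v t x * iteratedDeriv n (testFun p s (bracket t)) x| ≤
      K * bracket t ^ (p - 1 - p * n + s / 2) := by
  obtain ⟨M, hM⟩ := h.exists_abs_integral_mul_le
  obtain ⟨K, hK⟩ := exists_abs_iteratedDeriv_testFun_le hps n
  exact ⟨M * K, fun t => hM t _ K _ s (bracket_pos t) _ (hK _ (one_le_bracket t)) fun x hx =>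
    iteratedDeriv_eq_zero_of_forall_lt
      (fun x hx => testFun_eq_zero (bracket_pos t) hx.le) n hx⟩

lemma exists_abs_virial_le (h : IsForcedKdVSolution γ v w) {p s : ℝ} (hps : p ≤ s)
    (hs : p - 1 + s / 2 ≤ 0) : ∃ B, ∀ t, |virial v p s t| ≤ B := by
  obtain ⟨K, hK⟩ := h.exists_abs_integral_mul_iteratedDeriv_testFun_le hps 0
  simp only [iteratedDeriv_zero, Nat.cast_zero, mul_zero, sub_zero] at hK
  refine ⟨|K|, fun t => (hK t).trans ?_⟩
  have hpow : bracket t ^ (p - 1 + s / 2) ≤ 1 :=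
    Real.rpow_le_one_of_one_le_of_nonpos (one_le_bracket t) hs
  exact (mul_le_mul_of_nonneg_right (le_abs_self K) (Real.rpow_nonneg (bracket_pos t).le _)).trans
    (mul_le_of_le_one_right (abs_nonneg K) hpow)

lemma exists_integral_flux_le (h : IsForcedKdVSolution γ v w) (hγ : γ ≤ 0) :
    ∃ E, ∀ t, ∫ x, flux γ v w t x ≤ E := by
  obtain ⟨M, hM⟩ := h.exists_integral_mass_le
  refine ⟨(1 - γ) * M, fun t => ?_⟩
  calc ∫ x, flux γ v w t x ≤ ∫ x, (1 - γ) * (v t x ^ 2 + w t x) :=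
        integral_mono (h.integrable_flux t) ((h.integrable_mass t).const_mul _)
          (h.flux_le_mass hγ t)
    _ = (1 - γ) * ∫ x, (v t x ^ 2 + w t x) := integral_const_mul _ _
    _ ≤ (1 - γ) * M := by gcongr; exacts [by linarith, hM t]

lemma exists_le_integral_flux_mul_deriv_testFun (h : IsForcedKdVSolution γ v w) (hγ : γ ≤ 0)
    {p s : ℝ} (hps : p ≤ s) : ∃ K, ∀ t,
      (bracket t)⁻¹ * (∫ x in Set.Icc (-bracket t ^ p) (bracket t ^ p), flux γ v w t x)
        - K * bracket t ^ (p - 1 - s) ≤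
      ∫ x, flux γ v w t x * deriv (testFun p s (bracket t)) x := by
  obtain ⟨E, hE⟩ := h.exists_integral_flux_le hγ
  obtain ⟨K, hK⟩ := exists_le_deriv_testFun hps
  refine ⟨|K| * E, fun t => ?_⟩
  set b := bracket t
  set I := Set.Icc (-b ^ p) (b ^ p)
  have hb : 1 ≤ b := one_le_bracket t
  have hloc : Integrable (I.indicator (flux γ v w t)) :=
    (h.integrable_flux t).indicator measurableSet_Icc
  have htest : Integrable fun x => flux γ v w t x * deriv (testFun p s b) x :=
    ((h.contDiff_flux t).continuous.mul
      ((contDiff_testFun (n := 1)).continuous_deriv le_rfl)).integrable_of_hasCompactSupport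
        (hasCompactSupport_testFun (bracket_pos t)).deriv.mul_left
  calc b⁻¹ * (∫ x in I, flux γ v w t x) - |K| * E * b ^ (p - 1 - s)
      ≤ b⁻¹ * (∫ x in I, flux γ v w t x) - (∫ x, flux γ v w t x) * (|K| * b ^ (p - 1 - s)) := by
        rw [mul_right_comm, mul_comm (_ * _) E]
        gcongr
        exact hE t
    _ = ∫ x, (b⁻¹ * I.indicator (flux γ v w t) x - flux γ v w t x * (|K| * b ^ (p - 1 - s))) := by
        rw [integral_sub (hloc.const_mul _) ((h.integrable_flux t).mul_const _),
          integral_const_mul, integral_mul_const, integral_indicator measurableSet_Icc]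
    _ ≤ ∫ x, flux γ v w t x * deriv (testFun p s b) x := by
        refine integral_mono ((hloc.const_mul _).sub ((h.integrable_flux t).mul_const _)) htest
          fun x => ?_
        have hslope : I.indicator (fun _ => b⁻¹) x - |K| * b ^ (p - 1 - s) ≤
            deriv (testFun p s b) x :=
          (sub_le_sub_left (by gcongr; exact le_abs_self K) _).trans (hK b hb x)
        calc b⁻¹ * I.indicator (flux γ v w t) x - flux γ v w t x * (|K| * b ^ (p - 1 - s))
            = flux γ v w t x * (I.indicator (fun _ => b⁻¹) x - |K| * b ^ (p - 1 - s)) := by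
              by_cases hx : x ∈ I
              · simp only [Set.indicator_of_mem hx]; ring
              · simp only [Set.indicator_of_notMem hx]; ring
          _ ≤ _ := mul_le_mul_of_nonneg_left hslope (h.flux_nonneg hγ t x)

lemma lintegral_local_flux_lt_top (h : IsForcedKdVSolution γ v w) (hγ : γ ≤ 0) {p : ℝ}
    (hp : 1 / 3 ≤ p) (hp' : p < 2 / 3) (a : ℝ) :
    ∫⁻ t in Set.Ici a, ENNReal.ofReal ((bracket t)⁻¹ *
      ∫ x in Set.Icc (-bracket t ^ p) (bracket t ^ p), flux γ v w t x) < ⊤ := by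
  -- The largest support for which the virial functional stays bounded; the smaller it is, the
  -- larger the error `⟨t⟩ ^ (p - 1 - s)` caused by the cutoff.
  obtain ⟨s, hs⟩ : ∃ s, s = 1 - p / 2 := ⟨_, rfl⟩
  have hps : p ≤ s := by linarith
  obtain ⟨B, hB⟩ := h.exists_abs_virial_le hps (by linarith)
  obtain ⟨K₁, hK₁⟩ := h.exists_abs_integral_mul_deriv_time_testFun_le p s
  obtain ⟨K₂, hK₂⟩ := h.exists_abs_integral_mul_iteratedDeriv_testFun_le hps 3
  obtain ⟨K₃, hK₃⟩ := h.exists_le_integral_flux_mul_deriv_testFun hγ hps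
  have hpow : ∀ K r t, r ≤ 3 / 4 * p - 3 / 2 →
      K * bracket t ^ r ≤ |K| * bracket t ^ (3 / 4 * p - 3 / 2) := fun K r t hr =>
    mul_le_mul (le_abs_self K) (Real.rpow_le_rpow_of_exponent_le (one_le_bracket t) hr)
      (Real.rpow_nonneg (bracket_pos t).le _) (abs_nonneg K)
  refine lintegral_ofReal_lt_top_of_le_deriv_add
    (r := fun t => (|K₁| + |K₂| + |K₃|) * bracket t ^ (3 / 4 * p - 3 / 2))
    (fun t => h.hasDerivAt_virial p s t) hB ?_ ?_ (fun t => ?_) fun t => ?_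
  · exact continuous_const.mul (continuous_bracket_rpow _)
  · exact (integrable_bracket_rpow (by linarith)).const_mul _
  · exact mul_nonneg (inv_nonneg.2 (bracket_pos t).le) (integral_nonneg (h.flux_nonneg hγ t))
  · have h₁ := (abs_le.1 ((hK₁ t).trans (hpow K₁ _ t (by linarith)))).1
    have h₂ := (abs_le.1 ((hK₂ t).trans (hpow K₂ _ t (by push_cast; linarith)))).1
    have h₃ := hpow K₃ (p - 1 - s) t (by linarith)
    linarith [hK₃ t]

lemma lintegral_local_mass_lt_top (h : IsForcedKdVSolution γ v w) (hγ : γ < 0) {p : ℝ}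
    (hp : 1 / 3 ≤ p) (hp' : p < 2 / 3) (a : ℝ) :
    ∫⁻ t in Set.Ici a, ENNReal.ofReal ((bracket t)⁻¹ *
      ∫ x in Set.Icc (-bracket t ^ p) (bracket t ^ p), (v t x ^ 2 + w t x)) < ⊤ := by
  have hK : 0 ≤ 2 + (-γ)⁻¹ := add_nonneg zero_le_two (inv_nonneg.2 (neg_nonneg.2 hγ.le))
  refine (lintegral_mono (g := fun t => ENNReal.ofReal (2 + (-γ)⁻¹) * ENNReal.ofReal
    ((bracket t)⁻¹ * ∫ x in Set.Icc (-bracket t ^ p) (bracket t ^ p), flux γ v w t x))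
    fun t => ?_).trans_lt ?_
  · beta_reduce
    rw [← ENNReal.ofReal_mul hK, mul_left_comm,
      ← integral_const_mul (2 + (-γ)⁻¹)]
    exact ENNReal.ofReal_le_ofReal <| mul_le_mul_of_nonneg_left
      (integral_mono (h.integrable_mass t).integrableOn
        ((h.integrable_flux t).const_mul _).integrableOn (h.mass_le_flux hγ t))
      (inv_nonneg.2 (bracket_pos t).le)
  · rw [lintegral_const_mul' _ _ ENNReal.ofReal_ne_top]
    exact ENNReal.mul_lt_top ENNReal.ofReal_lt_top (h.lintegral_local_flux_lt_top hγ.le hp hp' a)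

lemma integral_mass_mul_le (h : IsForcedKdVSolution γ v w) (t : ℝ) {κ : ℝ → ℝ} {C c L : ℝ}
    (hc : 0 < c) (hL : 0 < L) (hC : 0 ≤ C) (hκ₀ : ∀ x, 0 ≤ κ x)
    (hκ : ∀ x, κ x ≤ C * (1 / Real.cosh (x / c))) :
    ∫ x, (v t x ^ 2 + w t x) * κ x ≤ C * ((∫ x in Set.Icc (-L) L, (v t x ^ 2 + w t x)) +
      c / L * ∫ x, (v t x ^ 2 + w t x)) := by
  have hmass := h.integrable_mass t
  have hloc := hmass.indicator (measurableSet_Icc (a := -L) (b := L))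
  rw [← integral_indicator measurableSet_Icc, ← integral_const_mul (c / L),
    ← integral_add hloc (hmass.const_mul _), ← integral_const_mul]
  refine integral_mono_of_nonneg
    (Eventually.of_forall fun x => mul_nonneg (h.mass_nonneg t x) (hκ₀ x))
    ((hloc.add (hmass.const_mul _)).const_mul C) (Eventually.of_forall fun x => ?_)
  calc (v t x ^ 2 + w t x) * κ x
      ≤ (v t x ^ 2 + w t x) * (C * ((Set.Icc (-L) L).indicator 1 x + c / L)) := by
        refine mul_le_mul_of_nonneg_left ((hκ x).trans ?_) (h.mass_nonneg t x)
        exact mul_le_mul_of_nonneg_left (one_div_cosh_le_indicator_add hc hL x) hC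
    _ = C * ((Set.Icc (-L) L).indicator (fun x => v t x ^ 2 + w t x) x +
          c / L * (v t x ^ 2 + w t x)) := by
        by_cases hx : x ∈ Set.Icc (-L) L
        · simp only [Set.indicator_of_mem hx, Pi.one_apply]; ring
        · simp only [Set.indicator_of_notMem hx]; ring

lemma integral_mass_mul_le_bracket (h : IsForcedKdVSolution γ v w) {p p₀ r a C M t : ℝ}
    (hM : ∫ x, (v t x ^ 2 + w t x) ≤ M) (hp₀ : 0 ≤ p₀) (hpp₀ : p ≤ p₀) (ha : 0 < a) (ht : 1 ≤ t)
    {κ : ℝ → ℝ} (hκ₀ : ∀ x, 0 ≤ κ x)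
    (hκ : ∀ x, κ x ≤ C * t⁻¹ * (1 / Real.cosh (x / (a * t ^ p)))) :
    ∫ x, (v t x ^ 2 + w t x) * κ x ≤ 2 * |C| * ((bracket t)⁻¹ *
      (∫ x in Set.Icc (-bracket t ^ r) (bracket t ^ r), (v t x ^ 2 + w t x)) +
        a * M * bracket t ^ (p₀ - r - 1)) := by
  have ht₀ : 0 < t := zero_lt_one.trans_le ht
  have hb := bracket_pos t
  have hinv : t⁻¹ ≤ 2 * (bracket t)⁻¹ := by
    rw [← div_eq_mul_inv, le_div_iff₀ hb, inv_mul_le_iff₀ ht₀, mul_comm]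
    exact bracket_le_two_mul ht
  have hpow : t ^ p ≤ bracket t ^ p₀ := (Real.rpow_le_rpow_of_exponent_le ht hpp₀).trans
    (Real.rpow_le_rpow ht₀.le (le_bracket t) hp₀)
  have hloc : 0 ≤ ∫ x in Set.Icc (-bracket t ^ r) (bracket t ^ r), (v t x ^ 2 + w t x) :=
    integral_nonneg (h.mass_nonneg t)
  have hmass : 0 ≤ ∫ x, (v t x ^ 2 + w t x) := integral_nonneg (h.mass_nonneg t)
  have hκ' : ∀ x, κ x ≤ |C| * t⁻¹ * (1 / Real.cosh (x / (a * t ^ p))) := fun x =>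
    (hκ x).trans <| mul_le_mul_of_nonneg_right (by gcongr; exact le_abs_self C)
      (one_div_nonneg.2 (Real.cosh_pos _).le)
  calc ∫ x, (v t x ^ 2 + w t x) * κ x
      ≤ |C| * t⁻¹ * ((∫ x in Set.Icc (-bracket t ^ r) (bracket t ^ r), (v t x ^ 2 + w t x)) +
          a * t ^ p / bracket t ^ r * ∫ x, (v t x ^ 2 + w t x)) :=
        h.integral_mass_mul_le t (by positivity) (by positivity) (by positivity) hκ₀ hκ'
    _ ≤ |C| * (2 * (bracket t)⁻¹) *
          ((∫ x in Set.Icc (-bracket t ^ r) (bracket t ^ r), (v t x ^ 2 + w t x)) +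
            a * bracket t ^ p₀ / bracket t ^ r * M) := by gcongr
    _ = _ := by
        rw [Real.rpow_sub_one hb.ne', Real.rpow_sub hb]
        ring

lemma lintegral_mass_mul_lt_top (h : IsForcedKdVSolution γ v w) (hγ : γ < 0) {p a C T : ℝ}
    (hp : p < 2 / 3) (ha : 0 < a) (hT : 1 ≤ T) {κ : ℝ → ℝ → ℝ} (hκ₀ : ∀ t ≥ T, ∀ x, 0 ≤ κ t x)
    (hκ : ∀ t ≥ T, ∀ x, κ t x ≤ C * t⁻¹ * (1 / Real.cosh (x / (a * t ^ p)))) :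
    ∫⁻ t in Set.Ici T, ENNReal.ofReal (∫ x, (v t x ^ 2 + w t x) * κ t x) < ⊤ := by
  obtain ⟨M, hM⟩ := h.exists_integral_mass_le
  obtain ⟨r, hpr, hr⟩ := exists_between (max_lt hp (by norm_num : (1 / 3 : ℝ) < 2 / 3))
  set p₀ := max p (1 / 3)
  have hp₀ : 0 ≤ p₀ := le_max_of_le_right (by norm_num)
  have hpointwise : ∀ t ∈ Set.Ici T, ENNReal.ofReal (∫ x, (v t x ^ 2 + w t x) * κ t x) ≤
      ENNReal.ofReal (2 * |C|) * (ENNReal.ofReal ((bracket t)⁻¹ *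
        ∫ x in Set.Icc (-bracket t ^ r) (bracket t ^ r), (v t x ^ 2 + w t x)) +
          ENNReal.ofReal (a * M * bracket t ^ (p₀ - r - 1))) := fun t ht =>
    calc ENNReal.ofReal (∫ x, (v t x ^ 2 + w t x) * κ t x)
        ≤ ENNReal.ofReal (2 * |C| * _) :=
          ENNReal.ofReal_le_ofReal (h.integral_mass_mul_le_bracket (hM t) hp₀ (le_max_left _ _) ha
            (hT.trans ht) (hκ₀ t ht) (hκ t ht))
      _ ≤ _ := by
          rw [ENNReal.ofReal_mul (by positivity)]
          gcongr
          exact ENNReal.ofReal_add_le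
  refine (setLIntegral_mono' measurableSet_Ici hpointwise).trans_lt ?_
  rw [lintegral_const_mul' _ _ ENNReal.ofReal_ne_top, lintegral_add_right _
    (((continuous_bracket_rpow _).measurable.const_mul _).ennreal_ofReal)]
  refine ENNReal.mul_lt_top ENNReal.ofReal_lt_top (ENNReal.add_lt_top.2 ⟨?_, ?_⟩)
  · exact h.lintegral_local_mass_lt_top hγ ((le_max_right _ _).trans hpr.le) hr T
  · exact ((integrable_bracket_rpow (by linarith)).const_mul _).integrableOn.lintegral_lt_top

end IsForcedKdVSolution

end ForcedKdV

section LogWeight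

lemma exists_log_rpow_le_mul_rpow (q : ℝ) {ε : ℝ} (hε : 0 < ε) :
    ∃ K > 0, ∀ t, Real.exp 1 ≤ t → Real.log t ^ q ≤ K * t ^ ε := by
  obtain ⟨δ, hδ, hδq⟩ := exists_pos_mul_lt hε |q|
  refine ⟨δ⁻¹ ^ |q|, by positivity, fun t ht => ?_⟩
  have ht₀ : 0 < t := (Real.exp_pos 1).trans_le ht
  have ht₁ : 1 ≤ t := (Real.one_le_exp zero_le_one).trans ht
  have hlog : 1 ≤ Real.log t := (Real.le_log_iff_exp_le ht₀).2 ht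
  calc Real.log t ^ q ≤ Real.log t ^ |q| :=
        Real.rpow_le_rpow_of_exponent_le hlog (le_abs_self q)
    _ ≤ (t ^ δ / δ) ^ |q| := by
        gcongr
        exact Real.log_le_rpow_div ht₀.le hδ
    _ = δ⁻¹ ^ |q| * t ^ (|q| * δ) := by
        rw [div_eq_inv_mul, Real.mul_rpow (by positivity) (by positivity),
          ← Real.rpow_mul ht₀.le, mul_comm δ]
    _ ≤ δ⁻¹ ^ |q| * t ^ ε := by gcongr

lemma exists_rpow_div_log_rpow_le {p r : ℝ} (q : ℝ) (hpr : p < r) :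
    ∃ K > 0, ∀ t, Real.exp 1 ≤ t → t ^ p / Real.log t ^ q ≤ K * t ^ r := by
  obtain ⟨K, hK, hlog⟩ := exists_log_rpow_le_mul_rpow (-q) (sub_pos.2 hpr)
  refine ⟨K, hK, fun t ht => ?_⟩
  have ht₀ : 0 < t := (Real.exp_pos 1).trans_le ht
  have hlog₀ : 0 ≤ Real.log t := Real.log_nonneg ((Real.one_le_exp zero_le_one).trans ht)
  calc t ^ p / Real.log t ^ q = t ^ p * Real.log t ^ (-q) := by
        rw [Real.rpow_neg hlog₀, div_eq_mul_inv]
    _ ≤ t ^ p * (K * t ^ (r - p)) := by gcongr; exact hlog t ht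
    _ = K * t ^ r := by rw [mul_left_comm, ← Real.rpow_add ht₀, add_sub_cancel]

lemma rpow_mul_log_rpow_mul_eq {p q t : ℝ} (ht : 0 < t) (hlog : 0 < Real.log t) :
    t ^ (1 - p) * Real.log t ^ (1 + q) * (t ^ p / Real.log t ^ q) = t * Real.log t := by
  rw [Real.rpow_sub ht, Real.rpow_add hlog, Real.rpow_one, Real.rpow_one]
  field_simp

lemma one_div_cosh_div_le_one_div_cosh_div {c d : ℝ} (hc : 0 < c) (hcd : c ≤ d) (x : ℝ) :
    1 / Real.cosh (x / c) ≤ 1 / Real.cosh (x / d) := by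
  refine one_div_le_one_div_of_le (Real.cosh_pos _) (Real.cosh_le_cosh.2 ?_)
  rw [abs_div, abs_div, abs_of_pos hc, abs_of_pos (hc.trans_le hcd)]
  gcongr

lemma exists_log_weight_mul_sech_le {p r a : ℝ} (q : ℝ) (hpr : p < r) (ha : 0 < a) :
    ∃ K > 0, ∀ t, Real.exp 1 ≤ t → ∀ x,
      1 / (t ^ (1 - p) * Real.log t ^ (1 + q) * (t ^ p / Real.log t ^ q)) *
        (1 / Real.cosh (x / (a * (t ^ p / Real.log t ^ q)))) ≤
      t⁻¹ * (1 / Real.cosh (x / (K * t ^ r))) := by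
  obtain ⟨K, hK, hle⟩ := exists_rpow_div_log_rpow_le q hpr
  refine ⟨a * K, mul_pos ha hK, fun t ht x => ?_⟩
  have ht₀ : 0 < t := (Real.exp_pos 1).trans_le ht
  have hlog : 1 ≤ Real.log t := (Real.le_log_iff_exp_le ht₀).2 ht
  have hlog₀ : 0 < Real.log t := zero_lt_one.trans_le hlog
  have := Real.cosh_pos (x / (a * (t ^ p / Real.log t ^ q)))
  rw [rpow_mul_log_rpow_mul_eq ht₀ hlog₀, ← one_div t, mul_assoc a K]
  gcongr ?_ * ?_
  · exact one_div_le_one_div_of_le ht₀ (le_mul_of_one_le_right ht₀.le hlog)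
  · exact one_div_cosh_div_le_one_div_cosh_div (by positivity) (by gcongr; exact hle t ht) x

end LogWeight

end SKdV

open SKdV

lemma IsSKdVSolution.isForcedKdVSolution {α β γ : ℝ} {u : ℝ → ℝ → ℂ} {v : ℝ → ℝ → ℝ}
    (h : IsSKdVSolution α β γ u v) : IsForcedKdVSolution γ v fun t x => ‖u t x‖ ^ 2 := by
  obtain ⟨hu, hv, hu_schwartz, hv_schwartz, -, heq, C, hC⟩ := h
  have hslice (t : ℝ) : ContDiff ℝ (⊤ : ℕ∞) fun x : ℝ => (t, x) := by fun_prop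
  refine ⟨hv.of_le (mod_cast le_top), fun t => ?_, fun t => ?_, fun t x => sq_nonneg _, heq,
    fun t => ?_, fun t => ?_, C, fun t => ?_⟩
  · exact (hv.comp (hslice t)).of_le (WithTop.coe_le_coe.2 le_top)
  · exact ((hu.comp (hslice t)).norm_sq ℝ).of_le (by exact_mod_cast le_top)
  · obtain ⟨g, hg⟩ := hv_schwartz t
    simpa only [hg] using (g.memLp 2 volume).integrable_sq
  · obtain ⟨f, hf⟩ := hu_schwartz t
    simpa only [hf] using (f.memLp 2 volume).integrable_norm_pow two_ne_zero
  · have h₁ : 0 ≤ ∫ x, ‖deriv (u t) x‖ ^ 2 := integral_nonneg fun x => sq_nonneg _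
    have h₂ : 0 ≤ ∫ x, deriv (v t) x ^ 2 := integral_nonneg fun x => sq_nonneg _
    linarith [hC t]

theorem skdv_weighted_mass_estimate_general {γ : ℝ} (hγ : γ < 0) {v w : ℝ → ℝ → ℝ}
    (hsol : IsForcedKdVSolution γ v w) {p q a : ℝ} (hp : p < 2 / 3) (ha : 0 < a)
    {lam η : ℝ → ℝ} (hlam : ∀ t, lam t = t ^ p / Real.log t ^ q)
    (hη : ∀ t, η t = t ^ (1 - p) * Real.log t ^ (1 + q))
    (ℓ : ℝ → ℝ) :
    ∫⁻ t in Set.Ici (10 : ℝ), ENNReal.ofReal ((1 / (η t * lam t)) *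
      ∫ x, (v t x ^ 2 + w t x) * (1 / Real.cosh (x / (a * lam t))) *
        (1 / Real.cosh (x / ℓ t))) < ⊤ := by
  obtain ⟨r, hpr, hr⟩ := exists_between hp
  obtain ⟨K, hK, hle⟩ := exists_log_weight_mul_sech_le q hpr ha
  have hweight : ∀ t ≥ 10, ∀ x,
      0 ≤ 1 / (η t * lam t) * (1 / Real.cosh (x / (a * lam t))) ∧
        1 / (η t * lam t) * (1 / Real.cosh (x / (a * lam t))) ≤
          t⁻¹ * (1 / Real.cosh (x / (K * t ^ r))) := fun t ht x => by
    have hlog : 0 < Real.log t := Real.log_pos (by linarith)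
    have := Real.cosh_pos (x / (a * (t ^ p / Real.log t ^ q)))
    rw [hη, hlam]
    exact ⟨by positivity, hle t (Real.exp_one_lt_three.le.trans (by linarith)) x⟩
  have hsech₀ : ∀ y, 0 ≤ 1 / Real.cosh y := fun y => one_div_nonneg.2 (Real.cosh_pos y).le
  have hsech₁ : ∀ y, 1 / Real.cosh y ≤ 1 := fun y =>
    div_le_one_of_le₀ (Real.one_le_cosh y) (Real.cosh_pos y).le
  have h := hsol.lintegral_mass_mul_lt_top hγ (C := 1) (T := 10) hr hK (by norm_num)
    (fun t ht x => mul_nonneg (hweight t ht x).1 (hsech₀ (x / ℓ t))) fun t ht x =>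
      (mul_le_of_le_one_right (hweight t ht x).1 (hsech₁ (x / ℓ t))).trans
        (by simpa only [one_mul] using (hweight t ht x).2)
  refine lt_of_eq_of_lt ?_ h
  congr! 3 with t
  rw [← integral_const_mul]
  congr with x
  ring

/-- The key space-time weighted estimate for the `L²` masses of `u` and `v`:
    with `λ₁(t) = t^{p₁}/(log t)^{q₁}`, `λ₂ = λ₁^{p₂}`, `η(t) = t^{1-p₁} (log t)^{1+q₁}`,
    the double integral of `(v² + |u|²) sech(x/(a λ₁)) sech(x/(b λ₂)) / (η λ₁)` is finite. -/
theorem skdv_weighted_mass_estimate (α β γ : ℝ) (hα : α < 0) (hγ : γ < 0)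
    (u : ℝ → ℝ → ℂ) (v : ℝ → ℝ → ℝ) (hsol : IsSKdVSolution α β γ u v)
    (p₁ q₁ p₂ : ℝ) (hq₁ : 0 < q₁) (hp₂ : 1 < p₂)
    (hp₁ : 0 < p₁) (hp₁' : p₁ ≤ 2 / (p₂ + 2))
    (lam₁ lam₂ η : ℝ → ℝ)
    (hlam₁ : ∀ t, lam₁ t = t ^ p₁ / Real.log t ^ q₁)
    (hlam₂ : ∀ t, lam₂ t = lam₁ t ^ p₂)
    (hη : ∀ t, η t = t ^ (1 - p₁) * Real.log t ^ (1 + q₁))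
    (a b : ℝ) (ha : 0 < a) (hb : 0 < b) :
    ∫⁻ t in Set.Ici (10 : ℝ),
        ENNReal.ofReal ((1 / (η t * lam₁ t)) *
          ∫ x : ℝ, ((v t x) ^ 2 + ‖u t x‖ ^ 2) *
            (1 / Real.cosh (x / (a * lam₁ t))) *
            (1 / Real.cosh (x / (b * lam₂ t)))) < ⊤ := by
  have hp : p₁ < 2 / 3 := hp₁'.trans_lt (by gcongr; linarith)
  exact skdv_weighted_mass_estimate_general hγ hsol.isForcedKdVSolution hp ha hlam₁ hη _
end
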